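/- arXiv:math/0505563 — 5 statements merged into one kernel-verified Lean document; each statement's English description precedes it below -/
import Mathlib

section
/- Let X be a topological space equipped with a continuous involution ν : X → X (ν ∘ ν = id), and let n, m be nonnegative integers. If there exist a continuous map φ : S^n → X with φ(−x) = ν(φ(x)) for all x ∈ S^n, and a continuous map ψ : X → S^m with ψ(ν(y)) = −ψ(y) for all y ∈ X, then n ≤ m. (In the terminology of the paper: Coind X ≤ Ind X, and more generally the coindex of the source bounds the index of the target of any ℤ₂-map.) -/
/-!
It suffices that an odd continuous map `f` from the unit sphere of `ℝ^(n+1)` to `ℝ^n` vanishes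
somewhere: otherwise `ψ ∘ φ` would be an odd map without zeros into a space of too small dimension.

On the sphere, `f` is a uniform limit of polynomial maps. Multiplying the odd homogeneous
components of a polynomial by powers of `∑ i, X i ^ 2` turns its odd part into a form of odd degree
`D` without changing it on the sphere. By compactness, it therefore suffices that `n` real forms
`Q i` of the same odd degree `D` in `n + 1` variables have a common zero on the sphere, and, by
compactness again, that this holds for the forms `X i ^ D + t * Q i` with arbitrarily large `t`,
where `X i` runs through all variables but `X 0`.

Setting `X 0 = 1` leaves `n` polynomials `g i = X i ^ D + t * P i` of degree at most `D` in `n`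
variables. For `t = 0` the products `∏ i, g i ^ (m i / D) * X i ^ (m i % D)` are the monomials, so
they still form a basis of the polynomial ring for all but countably many `t`, the exceptions being
roots of determinants. Then the quotient by the ideal of the `g i` has dimension `D ^ n`, which is
odd, and a real algebra of odd dimension has a real point: zero divisors allow passing to a smaller
quotient of odd dimension, and an algebra without them is `ℝ`, since `ℂ` has even dimension.
-/

open MvPolynomial Module

section RealPoints

theorem finrank_quotient_span_singleton_add_finrank_quotient_torsionOf {K B : Type*} [Field K]
    [CommRing B] [Algebra K B] [Module.Finite K B] (x : B) :
    finrank K (B ⧸ Ideal.span {x}) + finrank K (B ⧸ Ideal.torsionOf B B x) = finrank K B := by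
  have e : finrank K (B ⧸ Ideal.torsionOf B B x) = finrank K (Ideal.span {x}) :=
    ((Ideal.quotTorsionOfEquivSpanSingleton B B x).restrictScalars K).finrank_eq
  rw [e]
  exact Submodule.finrank_quotient_add_finrank ((Ideal.span {x}).restrictScalars K)

theorem finrank_quotient_lt_of_ne_bot {K B : Type*} [Field K] [CommRing B] [Algebra K B]
    [Module.Finite K B] {I : Ideal B} (hI : I ≠ ⊥) : finrank K (B ⧸ I) < finrank K B := by
  have hadd := Submodule.finrank_quotient_add_finrank (I.restrictScalars K)
  have hpos : 0 < finrank K (I.restrictScalars K) :=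
    Submodule.one_le_finrank_iff.mpr (by simpa using hI)
  exact (Nat.lt_add_of_pos_right hpos).trans_eq hadd

theorem nonempty_algHom_real_of_odd_finrank_of_isDomain {B : Type*} [CommRing B] [IsDomain B]
    [Algebra ℝ B] (hB : Odd (finrank ℝ B)) : Nonempty (B →ₐ[ℝ] ℝ) := by
  have : Module.Finite ℝ B := finite_of_finrank_pos hB.pos
  let := (isField_of_isIntegral_of_isField' (R := ℝ) (S := B) (Field.toIsField ℝ)).toField
  obtain ⟨⟨e⟩⟩ | ⟨⟨e⟩⟩ := Real.nonempty_algEquiv_or B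
  · exact ⟨e.toAlgHom⟩
  · rw [e.toLinearEquiv.finrank_eq, Complex.finrank_real_complex] at hB
    exact absurd hB (by decide)

theorem nonempty_algHom_real_of_odd_finrank {B : Type*} [CommRing B] [Algebra ℝ B]
    (hB : Odd (finrank ℝ B)) : Nonempty (B →ₐ[ℝ] ℝ) := by
  induction hk : finrank ℝ B using Nat.strong_induction_on generalizing B with
  | _ k ih =>
  have : Module.Finite ℝ B := finite_of_finrank_pos hB.pos
  have : Nontrivial B := nontrivial_of_finrank_pos hB.pos
  have of_quotient {I : Ideal B} (hI : I ≠ ⊥) (h_odd : Odd (finrank ℝ (B ⧸ I))) :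
      Nonempty (B →ₐ[ℝ] ℝ) :=
    (ih _ (hk ▸ finrank_quotient_lt_of_ne_bot hI) h_odd rfl).map
      fun h => h.comp (Ideal.Quotient.mkₐ ℝ I)
  by_cases hdom : NoZeroDivisors B
  · have : IsDomain B := NoZeroDivisors.to_isDomain B
    exact nonempty_algHom_real_of_odd_finrank_of_isDomain hB
  · obtain ⟨y, x, hyx, hy, hx⟩ : ∃ y x : B, y * x = 0 ∧ y ≠ 0 ∧ x ≠ 0 := by
      simpa [noZeroDivisors_iff] using hdom
    have hspan : Ideal.span {x} ≠ ⊥ := by simpa using hx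
    have htorsion : Ideal.torsionOf B B x ≠ ⊥ :=
      (Submodule.ne_bot_iff _).mpr ⟨y, by simpa using hyx, hy⟩
    rw [← finrank_quotient_span_singleton_add_finrank_quotient_torsionOf x] at hB
    obtain h | h : Odd (finrank ℝ (B ⧸ Ideal.span {x})) ∨
        Odd (finrank ℝ (B ⧸ Ideal.torsionOf B B x)) := by grind
    · exact of_quotient hspan h
    · exact of_quotient htorsion h

theorem exists_forall_mem_eval_eq_zero_of_odd_finrank {σ : Type*} {I : Ideal (MvPolynomial σ ℝ)}
    (hI : Odd (finrank ℝ (MvPolynomial σ ℝ ⧸ I))) : ∃ y : σ → ℝ, ∀ p ∈ I, eval y p = 0 := by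
  obtain ⟨h⟩ := nonempty_algHom_real_of_odd_finrank hI
  let f : MvPolynomial σ ℝ →ₐ[ℝ] ℝ := h.comp (Ideal.Quotient.mkₐ ℝ I)
  refine ⟨fun i => f (X i), fun p hp => ?_⟩
  have heval : eval (fun i => f (X i)) p = f p := by
    rw [← coe_aeval_eq_eval, aeval_unique f]
    simp [Function.comp_def]
  rw [heval]
  simp [f, Ideal.Quotient.eq_zero_iff_mem.mpr hp]

end RealPoints

section CoeffMatrix

variable {σ R : Type*} [CommRing R]

/-- The square matrix formed by the coefficients on the monomials with exponent in `s` of the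
members indexed by `s` of a family of polynomials. -/
def coeffMatrix (v : (σ →₀ ℕ) → MvPolynomial σ R) (s : Finset (σ →₀ ℕ)) : Matrix s s R :=
  .of fun a b => (v a).coeff b

theorem coeff_sum_smul_eq_vecMul_coeffMatrix (v : (σ →₀ ℕ) → MvPolynomial σ R)
    {s : Finset (σ →₀ ℕ)} (w : s → R) (b : s) :
    (∑ a, w a • v a).coeff b = Matrix.vecMul w (coeffMatrix v s) b := by
  simp [coeff_sum, Matrix.vecMul, dotProduct, coeffMatrix]

variable (σ) in
/-- The exponents of the monomials of total degree at most `k`. -/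
noncomputable def exponentsOfDegreeLE [Finite σ] (k : ℕ) : Finset (σ →₀ ℕ) :=
  (Finsupp.finite_of_degree_le k).toFinset

theorem mem_exponentsOfDegreeLE [Finite σ] {k : ℕ} {m : σ →₀ ℕ} :
    m ∈ exponentsOfDegreeLE σ k ↔ m.degree ≤ k := by
  simp [exponentsOfDegreeLE]

theorem support_subset_exponentsOfDegreeLE [Finite σ] {k : ℕ} {p : MvPolynomial σ R} :
    p.support ⊆ exponentsOfDegreeLE σ k ↔ p.totalDegree ≤ k := by
  simp [Finset.subset_iff, mem_exponentsOfDegreeLE, totalDegree, Finsupp.degree_apply,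
    Finsupp.sum]

variable [DecidableEq σ]

theorem linearIndepOn_of_isUnit_det_coeffMatrix {v : (σ →₀ ℕ) → MvPolynomial σ R}
    {s : Finset (σ →₀ ℕ)} (hdet : IsUnit (coeffMatrix v s).det) :
    LinearIndepOn R v (s : Set (σ →₀ ℕ)) := by
  refine Fintype.linearIndependent_iff.mpr fun w hw => congrFun ?_
  refine Matrix.vecMul_injective_of_isUnit ((Matrix.isUnit_iff_isUnit_det _).mpr hdet)
    (funext fun b => ?_)
  simp only [← coeff_sum_smul_eq_vecMul_coeffMatrix]
  simpa using congrArg (coeff b.1) hw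

theorem mem_span_range_of_isUnit_det_coeffMatrix {v : (σ →₀ ℕ) → MvPolynomial σ R}
    {s : Finset (σ →₀ ℕ)} (hdet : IsUnit (coeffMatrix v s).det)
    (hv : ∀ a ∈ s, (v a).support ⊆ s) {p : MvPolynomial σ R} (hp : p.support ⊆ s) :
    p ∈ Submodule.span R (Set.range v) := by
  obtain ⟨w, hw⟩ := Matrix.vecMul_surjective_iff_isUnit.mpr
    ((Matrix.isUnit_iff_isUnit_det _).mpr hdet) fun b => p.coeff b
  have hpw : p = ∑ a, w a • v a := by
    ext b
    by_cases hb : b ∈ s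
    · rw [coeff_sum_smul_eq_vecMul_coeffMatrix v w ⟨b, hb⟩]
      exact (congrFun hw ⟨b, hb⟩).symm
    · have hvb (a : s) : (v a).coeff b = 0 := notMem_support_iff.mp fun h => hb (hv a a.2 h)
      rw [notMem_support_iff.mp fun h => hb (hp h)]
      simp [coeff_sum, hvb]
  rw [hpw]
  exact Submodule.sum_mem _ fun a _ => Submodule.smul_mem _ _ (Submodule.subset_span ⟨a, rfl⟩)

variable [Finite σ]

theorem linearIndependent_of_isUnit_det_coeffMatrix {v : (σ →₀ ℕ) → MvPolynomial σ R}
    (hdet : ∀ k, IsUnit (coeffMatrix v (exponentsOfDegreeLE σ k)).det) :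
    LinearIndependent R v := by
  have hmono : Monotone fun k => (exponentsOfDegreeLE σ k : Set (σ →₀ ℕ)) := fun k l hkl m hm => by
    simp only [Finset.mem_coe, mem_exponentsOfDegreeLE] at hm ⊢
    exact hm.trans hkl
  have hunion : ⋃ k, (exponentsOfDegreeLE σ k : Set (σ →₀ ℕ)) = Set.univ :=
    Set.eq_univ_of_forall fun m =>
      Set.mem_iUnion_of_mem m.degree (mem_exponentsOfDegreeLE.mpr le_rfl)
  rw [← linearIndepOn_univ_iff, ← hunion]
  exact linearIndepOn_iUnion_of_directed hmono.directed_le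
    fun k => linearIndepOn_of_isUnit_det_coeffMatrix (hdet k)

theorem span_range_eq_top_of_isUnit_det_coeffMatrix {v : (σ →₀ ℕ) → MvPolynomial σ R}
    (hv : ∀ m, (v m).totalDegree ≤ m.degree)
    (hdet : ∀ k, IsUnit (coeffMatrix v (exponentsOfDegreeLE σ k)).det) :
    Submodule.span R (Set.range v) = ⊤ := by
  refine Submodule.eq_top_iff'.mpr fun p => ?_
  refine mem_span_range_of_isUnit_det_coeffMatrix (hdet p.totalDegree) (fun a ha => ?_)
    (support_subset_exponentsOfDegreeLE.mpr le_rfl)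
  exact support_subset_exponentsOfDegreeLE.mpr ((hv a).trans (mem_exponentsOfDegreeLE.mp ha))

end CoeffMatrix

section AdicExpansion

theorem finrank_quotient_span_image {R M ι : Type*} [Ring R] [StrongRankCondition R]
    [AddCommGroup M] [Module R M] (b : Basis ι R M) (s : Set ι) :
    finrank R (M ⧸ Submodule.span R (b '' s)) = Nat.card ↥sᶜ := by
  have hcompl : IsCompl (Submodule.span R (b '' s)) (Submodule.span R (b '' sᶜ)) := by
    refine ⟨b.linearIndependent.disjoint_span_image disjoint_compl_right, ?_⟩
    rw [codisjoint_iff, ← Submodule.span_union, ← Set.image_union, Set.union_compl_self,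
      Set.image_univ, b.span_eq]
  have hli : LinearIndependent R fun i : ↥sᶜ => b i :=
    b.linearIndependent.comp _ Subtype.val_injective
  rw [(Submodule.quotientEquivOfIsCompl _ _ hcompl).finrank_eq, Set.image_eq_range,
    finrank_eq_nat_card_basis (Basis.span hli)]

variable {σ R : Type*} [CommRing R]

/-- The monomial `m` in which every factor `X i ^ D` is replaced by `g i`, that is
`∏ i, g i ^ (m i / D) * X i ^ (m i % D)`. When these products form a basis, they give the
multivariate analogue of the expansion of a polynomial in base `g`. -/
noncomputable def adicMonomial [Fintype σ] (D : ℕ) (g : σ → MvPolynomial σ R) (m : σ →₀ ℕ) :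
    MvPolynomial σ R :=
  ∏ i, g i ^ (m i / D) * X i ^ (m i % D)

variable [Fintype σ]

theorem totalDegree_adicMonomial_le {D : ℕ} {g : σ → MvPolynomial σ R}
    (hg : ∀ i, (g i).totalDegree ≤ D) (m : σ →₀ ℕ) :
    (adicMonomial D g m).totalDegree ≤ m.degree := by
  rw [Finsupp.degree_eq_sum]
  refine (totalDegree_finsetProd _ _).trans (Finset.sum_le_sum fun i _ => ?_)
  calc (g i ^ (m i / D) * X i ^ (m i % D)).totalDegree
      ≤ m i / D * (g i).totalDegree + m i % D * (X i : MvPolynomial σ R).totalDegree :=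
        (totalDegree_mul _ _).trans (add_le_add (totalDegree_pow _ _) (totalDegree_pow _ _))
    _ ≤ m i / D * D + m i % D * 1 := by
        gcongr
        · exact hg i
        · exact (isHomogeneous_X R i).totalDegree_le
    _ = m i := by rw [mul_one, Nat.div_add_mod']

theorem map_adicMonomial {S : Type*} [CommRing S] (f : R →+* S) (D : ℕ)
    (g : σ → MvPolynomial σ R) (m : σ →₀ ℕ) :
    map f (adicMonomial D g m) = adicMonomial D (fun i => map f (g i)) m := by
  simp [adicMonomial]

theorem adicMonomial_X_pow (D : ℕ) (m : σ →₀ ℕ) :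
    adicMonomial D (fun i => (X i ^ D : MvPolynomial σ R)) m = monomial m 1 := by
  simp only [adicMonomial, ← pow_mul, ← pow_add, Nat.div_add_mod]
  rw [monomial_eq, Finsupp.prod_fintype _ _ (by simp), map_one, one_mul]

theorem mul_adicMonomial {D : ℕ} (hD : 0 < D) (g : σ → MvPolynomial σ R) (i : σ) (m : σ →₀ ℕ) :
    g i * adicMonomial D g m = adicMonomial D g (m + Finsupp.single i D) := by
  classical
  rw [adicMonomial, adicMonomial, Fintype.prod_eq_mul_prod_compl i,
    Fintype.prod_eq_mul_prod_compl i, ← mul_assoc]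
  congr 1
  · simp [Nat.add_div_right _ hD, pow_succ', mul_assoc]
  · refine Finset.prod_congr rfl fun j hj => ?_
    have hji : j ≠ i := by simpa using hj
    simp [hji]

theorem span_adicMonomial_eq_span_range {D : ℕ} (hD : 0 < D) {g : σ → MvPolynomial σ R}
    (hspan : Submodule.span R (Set.range (adicMonomial D g)) = ⊤) :
    Submodule.span R (adicMonomial D g '' {m | ∃ i, D ≤ m i}) =
      (Ideal.span (Set.range g)).restrictScalars R := by
  apply le_antisymm
  · rw [Submodule.span_le, Set.image_subset_iff]
    rintro m ⟨i, hi⟩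
    have hm : m - Finsupp.single i D + Finsupp.single i D = m :=
      tsub_add_cancel_of_le (Finsupp.single_le_iff.mpr hi)
    rw [Set.mem_preimage, ← hm, ← mul_adicMonomial hD]
    exact Ideal.mul_mem_right _ _ (Ideal.subset_span ⟨i, rfl⟩)
  · intro p hp
    obtain ⟨c, rfl⟩ := Ideal.mem_span_range_iff_exists_fun.mp hp
    refine Submodule.sum_mem _ fun i _ => ?_
    have hc : c i ∈ Submodule.span R (Set.range (adicMonomial D g)) := hspan ▸ Submodule.mem_top
    generalize c i = q at hc
    induction hc using Submodule.span_induction with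
    | mem q hq =>
      obtain ⟨m, rfl⟩ := hq
      rw [mul_comm, mul_adicMonomial hD]
      exact Submodule.subset_span ⟨_, ⟨i, by simp⟩, rfl⟩
    | zero => simp
    | add q r _ _ hq hr => simpa [add_mul] using Submodule.add_mem _ hq hr
    | smul a q _ hq => simpa using Submodule.smul_mem _ a hq

theorem natCard_compl_setOf_exists_le (D : ℕ) :
    Nat.card ↥{m : σ →₀ ℕ | ∃ i, D ≤ m i}ᶜ = D ^ Fintype.card σ := by
  classical
  let e : ↥{m : σ →₀ ℕ | ∃ i, D ≤ m i}ᶜ ≃ (σ → Fin D) :=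
    { toFun m i := ⟨m.1 i, by simpa using fun h => m.2 ⟨i, h⟩⟩
      invFun a := ⟨Finsupp.equivFunOnFinite.symm fun i => a i, by simp⟩
      left_inv m := by ext; simp
      right_inv a := by ext; simp }
  simp [Nat.card_congr e]

theorem finrank_quotient_span_range_of_linearIndependent_adicMonomial [Nontrivial R] {D : ℕ}
    (hD : 0 < D) {g : σ → MvPolynomial σ R} (hli : LinearIndependent R (adicMonomial D g))
    (hspan : Submodule.span R (Set.range (adicMonomial D g)) = ⊤) :
    finrank R (MvPolynomial σ R ⧸ Ideal.span (Set.range g)) = D ^ Fintype.card σ := by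
  have h := finrank_quotient_span_image (Basis.mk hli hspan.ge) {m | ∃ i, D ≤ m i}
  rw [Basis.coe_mk, span_adicMonomial_eq_span_range hD hspan, natCard_compl_setOf_exists_le] at h
  exact h

theorem exists_forall_eval_eq_zero_of_odd_of_isUnit_det [DecidableEq σ] {D : ℕ} (hD : Odd D)
    {g : σ → MvPolynomial σ ℝ} (hg : ∀ i, (g i).totalDegree ≤ D)
    (hdet : ∀ k, IsUnit (coeffMatrix (adicMonomial D g) (exponentsOfDegreeLE σ k)).det) :
    ∃ y : σ → ℝ, ∀ i, eval y (g i) = 0 := by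
  have hrank : finrank ℝ (MvPolynomial σ ℝ ⧸ Ideal.span (Set.range g)) = D ^ Fintype.card σ :=
    finrank_quotient_span_range_of_linearIndependent_adicMonomial hD.pos
      (linearIndependent_of_isUnit_det_coeffMatrix hdet)
      (span_range_eq_top_of_isUnit_det_coeffMatrix (totalDegree_adicMonomial_le hg) hdet)
  obtain ⟨y, hy⟩ := exists_forall_mem_eval_eq_zero_of_odd_finrank (hrank ▸ hD.pow)
  exact ⟨y, fun i => hy _ (Ideal.subset_span ⟨i, rfl⟩)⟩

end AdicExpansion

section Perturbation

variable {σ R : Type*} [CommRing R] [DecidableEq σ]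

theorem map_det_coeffMatrix {S : Type*} [CommRing S] (f : R →+* S)
    (v : (σ →₀ ℕ) → MvPolynomial σ R) (s : Finset (σ →₀ ℕ)) :
    f (coeffMatrix v s).det = (coeffMatrix (map f ∘ v) s).det := by
  rw [RingHom.map_det]
  congr 1

theorem coeffMatrix_monomial (s : Finset (σ →₀ ℕ)) :
    coeffMatrix (fun m => monomial m (1 : R)) s = 1 := by
  ext a b
  simp [coeffMatrix, coeff_monomial, Matrix.one_apply]

variable [Fintype σ]

theorem finite_setOf_det_coeffMatrix_adicMonomial_eq_zero [IsDomain R] (D : ℕ)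
    (P : σ → MvPolynomial σ R) (s : Finset (σ →₀ ℕ)) :
    {t : R | (coeffMatrix (adicMonomial D fun i => X i ^ D + C t * P i) s).det = 0}.Finite := by
  let G (i : σ) : MvPolynomial σ (Polynomial R) :=
    X i ^ D + C Polynomial.X * map Polynomial.C (P i)
  have heval (t : R) : (coeffMatrix (adicMonomial D G) s).det.eval t =
      (coeffMatrix (adicMonomial D fun i => X i ^ D + C t * P i) s).det := by
    have hC : (Polynomial.evalRingHom t).comp Polynomial.C = RingHom.id R := by ext; simp
    rw [← Polynomial.coe_evalRingHom, map_det_coeffMatrix]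
    simp [Function.comp_def, map_adicMonomial, G, map_map, hC, map_id]
  have hne : (coeffMatrix (adicMonomial D G) s).det ≠ 0 := by
    intro h
    have h0 := heval 0
    simp only [h, Polynomial.eval_zero, map_zero, zero_mul, add_zero] at h0
    simp [funext (adicMonomial_X_pow (R := R) D), coeffMatrix_monomial] at h0
  refine (Polynomial.finite_setOfPred_isRoot hne).subset fun t ht => ?_
  exact (heval t).trans ht

theorem exists_gt_forall_pow_add_mul_eval_eq_zero {σ : Type*} [Finite σ] {D : ℕ} (hD : Odd D)
    {P : σ → MvPolynomial σ ℝ} (hP : ∀ i, (P i).totalDegree ≤ D) (T : ℝ) :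
    ∃ t > T, ∃ y : σ → ℝ, ∀ i, y i ^ D + t * eval y (P i) = 0 := by
  classical
  have := Fintype.ofFinite σ
  let g (t : ℝ) (i : σ) : MvPolynomial σ ℝ := X i ^ D + C t * P i
  have hcountable : (⋃ k, {t : ℝ |
      (coeffMatrix (adicMonomial D (g t)) (exponentsOfDegreeLE σ k)).det = 0}).Countable :=
    Set.countable_iUnion fun k =>
      (finite_setOf_det_coeffMatrix_adicMonomial_eq_zero D P _).countable
  obtain ⟨t, ht, htT⟩ :=
    (hcountable.dense_compl ℝ).exists_mem_open isOpen_Ioi (Set.nonempty_Ioi (a := T))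
  have hdet (k : ℕ) :
      IsUnit (coeffMatrix (adicMonomial D (g t)) (exponentsOfDegreeLE σ k)).det :=
    isUnit_iff_ne_zero.mpr fun h => ht (Set.mem_iUnion_of_mem k h)
  have hdeg (i : σ) : (g t i).totalDegree ≤ D := by
    refine (totalDegree_add _ _).trans (max_le (totalDegree_X_pow _ _).le ?_)
    exact (totalDegree_mul _ _).trans (by simpa using hP i)
  obtain ⟨y, hy⟩ := exists_forall_eval_eq_zero_of_odd_of_isUnit_det hD hdeg hdet
  exact ⟨t, htT, y, fun i => by simpa [g] using hy i⟩

end Perturbation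

section HomogeneousForms

theorem eval_smul_of_isHomogeneous {σ R : Type*} [CommSemiring R] {p : MvPolynomial σ R} {D : ℕ}
    (hp : p.IsHomogeneous D) (c : R) (x : σ → R) : eval (c • x) p = c ^ D * eval x p := by
  rw [eval_eq, eval_eq, Finset.mul_sum]
  refine Finset.sum_congr rfl fun d hd => ?_
  simp only [Pi.smul_apply, smul_eq_mul, mul_pow, Finset.prod_mul_distrib,
    Finset.prod_pow_eq_pow_sum, ← hp.degree_eq_sum_deg_support hd]
  ring

theorem totalDegree_bind₁_le {σ τ R : Type*} [CommSemiring R] {g : σ → MvPolynomial τ R}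
    (hg : ∀ i, (g i).totalDegree ≤ 1) (p : MvPolynomial σ R) :
    (bind₁ g p).totalDegree ≤ p.totalDegree := by
  rw [← aeval_eq_bind₁, aeval_def, eval₂_eq]
  refine totalDegree_finsetSum_le fun d hd => ?_
  calc (algebraMap R (MvPolynomial τ R) (p.coeff d) * ∏ i ∈ d.support, g i ^ d i).totalDegree
      ≤ 0 + ∑ i ∈ d.support, d i * 1 := by
        refine (totalDegree_mul _ _).trans (add_le_add (totalDegree_C _).le ?_)
        refine (totalDegree_finsetProd _ _).trans (Finset.sum_le_sum fun i _ => ?_)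
        exact (totalDegree_pow _ _).trans (Nat.mul_le_mul_left _ (hg i))
    _ = d.sum fun _ k => k := by simp [Finsupp.sum]
    _ ≤ p.totalDegree := le_totalDegree hd

theorem exists_zero_eq_one_forall_pow_add_mul_eval_eq_zero {n D : ℕ} (hD : Odd D)
    {Q : Fin n → MvPolynomial (Fin (n + 1)) ℝ} (hQ : ∀ i, (Q i).totalDegree ≤ D) (T : ℝ) :
    ∃ t > T, ∃ z : Fin (n + 1) → ℝ, z 0 = 1 ∧ ∀ i, z i.succ ^ D + t * eval z (Q i) = 0 := by
  let c : Fin (n + 1) → MvPolynomial (Fin n) ℝ := Fin.cons 1 X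
  have hc (i : Fin (n + 1)) : (c i).totalDegree ≤ 1 := by
    cases i using Fin.cases <;> simp [c]
  obtain ⟨t, ht, y, hy⟩ := exists_gt_forall_pow_add_mul_eval_eq_zero hD
    (P := fun i => bind₁ c (Q i)) (fun i => (totalDegree_bind₁_le hc _).trans (hQ i)) T
  have heval (i : Fin n) :
      eval y (bind₁ c (Q i)) = eval (Fin.cons 1 y : Fin (n + 1) → ℝ) (Q i) := by
    have hcy : (fun j => aeval y (c j)) = (Fin.cons 1 y : Fin (n + 1) → ℝ) := by
      ext j
      cases j using Fin.cases <;> simp [c]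
    rw [← coe_aeval_eq_eval, ← coe_aeval_eq_eval, RingHom.coe_coe, RingHom.coe_coe,
      aeval_bind₁, hcy]
  exact ⟨t, ht, Fin.cons 1 y, rfl, fun i => by simpa [heval] using hy i⟩

theorem exists_mem_sphere_forall_pow_add_mul_eval_eq_zero {n D : ℕ} (hD : Odd D)
    {Q : Fin n → MvPolynomial (Fin (n + 1)) ℝ} (hQ : ∀ i, (Q i).IsHomogeneous D) (T : ℝ) :
    ∃ t > T, ∃ x ∈ Metric.sphere (0 : EuclideanSpace ℝ (Fin (n + 1))) 1,
      ∀ i, x i.succ ^ D + t * eval x.ofLp (Q i) = 0 := by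
  obtain ⟨t, ht, z, hz0, hz⟩ :=
    exists_zero_eq_one_forall_pow_add_mul_eval_eq_zero hD (fun i => (hQ i).totalDegree_le) T
  let w : EuclideanSpace ℝ (Fin (n + 1)) := WithLp.toLp 2 z
  have hw : w ≠ 0 := fun h => by
    have := congrArg (fun v : EuclideanSpace ℝ (Fin (n + 1)) => v 0) h
    simp [w, hz0] at this
  refine ⟨t, ht, ‖w‖⁻¹ • w, by simpa using norm_smul_inv_norm (𝕜 := ℝ) hw, fun i => ?_⟩
  rw [WithLp.ofLp_smul, eval_smul_of_isHomogeneous (hQ i), Pi.smul_apply, smul_eq_mul, mul_pow]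
  linear_combination ‖w‖⁻¹ ^ D * hz i

theorem exists_eq_zero_of_forall_exists_norm_le {α F : Type*} [TopologicalSpace α]
    [NormedAddCommGroup F] {K : Set α} (hK : IsCompact K) {f : α → F} (hf : ContinuousOn f K)
    (h : ∀ ε > 0, ∃ x ∈ K, ‖f x‖ ≤ ε) : ∃ x ∈ K, f x = 0 := by
  obtain ⟨x₁, hx₁, -⟩ := h 1 one_pos
  obtain ⟨x, hx, hmin⟩ := hK.exists_isMinOn ⟨x₁, hx₁⟩ hf.norm
  refine ⟨x, hx, norm_le_zero_iff.mp (le_of_forall_pos_le_add fun ε hε => ?_)⟩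
  obtain ⟨y, hy, hyε⟩ := h ε hε
  simpa using (hmin hy).trans hyε

theorem exists_mem_sphere_forall_eval_eq_zero {n D : ℕ} (hD : Odd D)
    {Q : Fin n → MvPolynomial (Fin (n + 1)) ℝ} (hQ : ∀ i, (Q i).IsHomogeneous D) :
    ∃ x ∈ Metric.sphere (0 : EuclideanSpace ℝ (Fin (n + 1))) 1, ∀ i, eval x.ofLp (Q i) = 0 := by
  let f (x : EuclideanSpace ℝ (Fin (n + 1))) (i : Fin n) : ℝ := eval x.ofLp (Q i)
  have hf : Continuous f := continuous_pi fun i =>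
    (continuous_eval (Q i)).comp (PiLp.continuous_ofLp 2 _)
  suffices ∃ x ∈ Metric.sphere 0 1, f x = 0 from
    this.imp fun x hx => ⟨hx.1, congrFun hx.2⟩
  refine exists_eq_zero_of_forall_exists_norm_le (isCompact_sphere _ _) hf.continuousOn
    fun ε hε => ?_
  obtain ⟨t, ht, x, hx, hxt⟩ := exists_mem_sphere_forall_pow_add_mul_eval_eq_zero hD hQ ε⁻¹
  have ht0 : 0 < t := (inv_pos.mpr hε).trans ht
  refine ⟨x, hx, (pi_norm_le_iff_of_nonneg hε.le).mpr fun i => ?_⟩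
  have hxi : |x i.succ| ≤ 1 := by
    simpa [mem_sphere_zero_iff_norm.mp hx] using PiLp.norm_apply_le x i.succ
  calc ‖f x i‖ = t⁻¹ * |x i.succ| ^ D := by
        have hfi : f x i = -(t⁻¹ * x i.succ ^ D) := by
          linear_combination t⁻¹ * hxt i - f x i * inv_mul_cancel₀ ht0.ne'
        rw [hfi, norm_neg, Real.norm_eq_abs, abs_mul, abs_pow, abs_of_pos (inv_pos.mpr ht0)]
    _ ≤ t⁻¹ * 1 := by gcongr; exact pow_le_one₀ (abs_nonneg _) hxi
    _ ≤ ε := by rw [mul_one]; exact (inv_lt_of_inv_lt₀ hε ht).le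

end HomogeneousForms

section OddPart

theorem sum_range_homogeneousComponent {σ R : Type*} [CommSemiring R] {D : ℕ}
    {p : MvPolynomial σ R} (hp : p.totalDegree ≤ D) :
    ∑ j ∈ Finset.range (D + 1), homogeneousComponent j p = p := by
  conv_rhs => rw [← sum_homogeneousComponent p]
  refine (Finset.sum_subset (Finset.range_mono (by lia)) fun j _ hj => ?_).symm
  exact homogeneousComponent_eq_zero j p (by simpa using hj)

variable {σ R : Type*} [Fintype σ] [CommRing R]

/-- The form of degree `D` obtained from the components of `p` of odd degree `j ≤ D` by
multiplying each with the power of `∑ i, X i ^ 2` that raises its degree to `D`. For odd `D` at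
least the degree of `p`, it agrees with the odd part of `p` on the unit sphere. -/
noncomputable def homogenizedOddPart (D : ℕ) (p : MvPolynomial σ R) : MvPolynomial σ R :=
  ∑ j ∈ Finset.range (D + 1) with Odd j,
    homogeneousComponent j p * (∑ i, X i ^ 2) ^ ((D - j) / 2)

theorem isHomogeneous_homogenizedOddPart {D : ℕ} (hD : Odd D) (p : MvPolynomial σ R) :
    (homogenizedOddPart D p).IsHomogeneous D := by
  refine IsHomogeneous.sum _ _ _ fun j hj => ?_
  have hsq : (∑ i, X i ^ 2 : MvPolynomial σ R).IsHomogeneous 2 :=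
    IsHomogeneous.sum _ _ _ fun i _ => isHomogeneous_X_pow i 2
  have hdeg : j + 2 * ((D - j) / 2) = D := by
    obtain ⟨hjD, hj_odd⟩ := by simpa using hj
    grind
  simpa only [hdeg] using (homogeneousComponent_isHomogeneous j p).mul (hsq.pow ((D - j) / 2))

theorem two_mul_eval_homogenizedOddPart {D : ℕ} {p : MvPolynomial σ R} (hp : p.totalDegree ≤ D)
    {x : σ → R} (hx : ∑ i, x i ^ 2 = 1) :
    2 * eval x (homogenizedOddPart D p) = eval x p - eval (-x) p := by
  have hneg (j : ℕ) : eval (-x) (homogeneousComponent j p) =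
      (-1) ^ j * eval x (homogeneousComponent j p) := by
    simpa using eval_smul_of_isHomogeneous (homogeneousComponent_isHomogeneous j p) (-1) x
  conv_rhs => rw [← sum_range_homogeneousComponent hp]
  rw [homogenizedOddPart, Finset.sum_filter, map_sum, map_sum, map_sum, Finset.mul_sum,
    ← Finset.sum_sub_distrib]
  refine Finset.sum_congr rfl fun j _ => ?_
  obtain hj | hj := Nat.even_or_odd j
  · simp [hneg, hj.neg_one_pow, Nat.not_odd_iff_even.mpr hj]
  · simp [hneg, hj.neg_one_pow, hj, hx, two_mul]

end OddPart

section BorsukUlam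

theorem exists_mvPolynomial_forall_abs_eval_sub_lt {α σ : Type*} [TopologicalSpace α]
    [CompactSpace α] {c : σ → C(α, ℝ)} (hc : ∀ x y, (∀ i, c i x = c i y) → x = y)
    (f : C(α, ℝ)) {ε : ℝ} (hε : 0 < ε) :
    ∃ p : MvPolynomial σ ℝ, ∀ x, |eval (fun i => c i x) p - f x| < ε := by
  have hsep : (aeval (R := ℝ) c).range.SeparatesPoints := fun x y hxy => by
    obtain ⟨i, hi⟩ : ∃ i, c i x ≠ c i y := by
      by_contra! h
      exact hxy (hc x y h)
    exact ⟨c i, ⟨c i, ⟨X i, by simp⟩, rfl⟩, hi⟩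
  obtain ⟨⟨_, p, rfl⟩, hp⟩ :=
    ContinuousMap.exists_mem_subalgebra_near_continuousMap_of_separatesPoints _ hsep f ε hε
  refine ⟨p, fun x => ?_⟩
  have heval : eval (fun i => c i x) p = aeval c p x := by
    have h := comp_aeval_apply c (ContinuousMap.evalAlgHom ℝ ℝ x) p
    rw [← coe_aeval_eq_eval]
    exact h.symm
  simpa [heval] using (ContinuousMap.norm_lt_iff _ hε).mp hp x

theorem exists_mvPolynomial_forall_mem_sphere_abs_eval_sub_lt {σ : Type*} [Fintype σ]
    {f : EuclideanSpace ℝ σ → ℝ} (hf : ContinuousOn f (Metric.sphere 0 1)) {ε : ℝ} (hε : 0 < ε) :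
    ∃ p : MvPolynomial σ ℝ, ∀ x ∈ Metric.sphere (0 : EuclideanSpace ℝ σ) 1,
      |eval x.ofLp p - f x| < ε := by
  have : CompactSpace (Metric.sphere (0 : EuclideanSpace ℝ σ) 1) :=
    isCompact_iff_compactSpace.mp (isCompact_sphere _ _)
  let c (i : σ) : C(Metric.sphere (0 : EuclideanSpace ℝ σ) 1, ℝ) := ⟨fun x => x.1 i, by fun_prop⟩
  obtain ⟨p, hp⟩ := exists_mvPolynomial_forall_abs_eval_sub_lt (c := c)
    (fun x y hxy => Subtype.ext (PiLp.ext hxy)) ⟨_, hf.domRestrict⟩ hε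
  exact ⟨p, fun x hx => hp ⟨x, hx⟩⟩

theorem exists_mem_sphere_eq_zero_of_odd_of_euclideanSpace {n : ℕ}
    {f : EuclideanSpace ℝ (Fin (n + 1)) → Fin n → ℝ} (hf : ContinuousOn f (Metric.sphere 0 1))
    (hodd : ∀ x ∈ Metric.sphere 0 1, f (-x) = -f x) : ∃ x ∈ Metric.sphere 0 1, f x = 0 := by
  refine exists_eq_zero_of_forall_exists_norm_le (isCompact_sphere _ _) hf fun ε hε => ?_
  choose p hp using fun i =>
    exists_mvPolynomial_forall_mem_sphere_abs_eval_sub_lt (continuousOn_pi.mp hf i) hε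
  let D := 2 * (Finset.univ.sup fun i => (p i).totalDegree) + 1
  have hD : Odd D := odd_two_mul_add_one _
  have hpD (i : Fin n) : (p i).totalDegree ≤ D := by
    have := Finset.le_sup (f := fun i => (p i).totalDegree) (Finset.mem_univ i)
    lia
  obtain ⟨x, hx, hx0⟩ := exists_mem_sphere_forall_eval_eq_zero hD
    fun i => isHomogeneous_homogenizedOddPart hD (p i)
  refine ⟨x, hx, (pi_norm_le_iff_of_nonneg hε.le).mpr fun i => ?_⟩
  have hxsq : ∑ j, x j ^ 2 = 1 := by
    rw [← EuclideanSpace.real_norm_sq_eq, mem_sphere_zero_iff_norm.mp hx, one_pow]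
  have heven : eval x.ofLp (p i) = eval (-x).ofLp (p i) := by
    have h := two_mul_eval_homogenizedOddPart (hpD i) hxsq
    rw [hx0 i, mul_zero] at h
    exact sub_eq_zero.mp h.symm
  have hpos := abs_lt.mp (hp i x hx)
  have hneg := abs_lt.mp (hp i (-x) (by simpa using hx))
  rw [hodd x hx, Pi.neg_apply, ← heven] at hneg
  exact abs_le.mpr ⟨by linarith, by linarith⟩

theorem exists_mem_sphere_eq_zero_of_odd {E F : Type*} [NormedAddCommGroup E] [NormedSpace ℝ E]
    [AddCommGroup F] [Module ℝ F] [TopologicalSpace F] [IsTopologicalAddGroup F]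
    [ContinuousSMul ℝ F] [T2Space F] [FiniteDimensional ℝ F]
    (hrank : (finrank ℝ F : Cardinal) < Module.rank ℝ E) {f : E → F}
    (hf : ContinuousOn f (Metric.sphere 0 1))
    (hodd : ∀ x ∈ Metric.sphere 0 1, f (-x) = -f x) : ∃ x ∈ Metric.sphere 0 1, f x = 0 := by
  have hrank_succ : (finrank ℝ F + 1 : ℕ) ≤ Module.rank ℝ E := by
    simpa [Cardinal.succ_natCast] using Order.succ_le_of_lt hrank
  obtain ⟨v, hv⟩ := exists_linearIndependent_of_le_rank hrank_succ
  let L : EuclideanSpace ℝ (Fin (finrank ℝ F + 1)) →L[ℝ] E := LinearMap.toContinuousLinearMap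
    (Fintype.linearCombination ℝ v ∘ₗ (WithLp.linearEquiv 2 ℝ _).toLinearMap)
  have hL {x} (hx : x ∈ Metric.sphere 0 1) : L x ≠ 0 := by
    intro h
    have hx0 := Fintype.linearIndependent_iff.mp hv x.ofLp h
    exact ne_zero_of_mem_unit_sphere ⟨x, hx⟩ (PiLp.ext hx0)
  let r (x : EuclideanSpace ℝ (Fin (finrank ℝ F + 1))) : E := ‖L x‖⁻¹ • L x
  have hr : Set.MapsTo r (Metric.sphere 0 1) (Metric.sphere 0 1) := fun x hx => by
    simpa using norm_smul_inv_norm (𝕜 := ℝ) (hL hx)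
  have hr_cont : ContinuousOn r (Metric.sphere 0 1) :=
    (L.continuous.norm.continuousOn.inv₀ fun x hx => norm_ne_zero_iff.mpr (hL hx)).smul
      L.continuous.continuousOn
  let e : F ≃L[ℝ] (Fin (finrank ℝ F) → ℝ) := .ofFinrankEq (finrank_fin_fun ℝ).symm
  obtain ⟨x, hx, hx0⟩ := exists_mem_sphere_eq_zero_of_odd_of_euclideanSpace
    (f := fun x => e (f (r x))) (e.continuous.comp_continuousOn (hf.comp hr_cont hr))
    fun x hx => by
      have hneg : r (-x) = -r x := by simp [r]
      rw [hneg, hodd _ (hr hx), map_neg]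
  exact ⟨r x, hr hx, by simpa using hx0⟩

end BorsukUlam

theorem coindex_le_index_general {X E F : Type*} [TopologicalSpace X]
    [NormedAddCommGroup E] [NormedSpace ℝ E]
    [AddCommGroup F] [Module ℝ F] [TopologicalSpace F] [IsTopologicalAddGroup F]
    [ContinuousSMul ℝ F] [T2Space F] [FiniteDimensional ℝ F]
    (ν : X → X) {φ : E → X} (hφcont : ContinuousOn φ (Metric.sphere 0 1))
    (hφ : ∀ x ∈ Metric.sphere 0 1, φ (-x) = ν (φ x)) {ψ : X → F} (hψcont : Continuous ψ)
    (hψ_ne : ∀ y, ψ y ≠ 0) (hψ : ∀ y, ψ (ν y) = -ψ y) :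
    Module.rank ℝ E ≤ (finrank ℝ F : Cardinal) := by
  by_contra! hrank
  obtain ⟨x, -, hx⟩ := exists_mem_sphere_eq_zero_of_odd hrank (hψcont.comp_continuousOn hφcont)
    fun x hx => by rw [Function.comp_apply, hφ x hx, hψ, Function.comp_apply]
  exact hψ_ne (φ x) hx

/-- **Coindex ≤ Index**: let `X` be a space with a continuous involution `ν`. If there
is a continuous ℤ₂-map `φ : S^n → X` (i.e. `φ(-x) = ν(φ(x))`) and a continuous ℤ₂-map
`ψ : X → S^m` (i.e. `ψ(ν(y)) = -ψ(y)`), then `n ≤ m`. -/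
theorem coindex_le_index {X : Type} [TopologicalSpace X]
    (ν : X → X) (hν : Continuous ν) (hinv : ∀ x, ν (ν x) = x) (n m : ℕ)
    (φ : EuclideanSpace ℝ (Fin (n + 1)) → X)
    (hφcont : ContinuousOn φ (Metric.sphere (0 : EuclideanSpace ℝ (Fin (n + 1))) 1))
    (hφ : ∀ x ∈ Metric.sphere (0 : EuclideanSpace ℝ (Fin (n + 1))) 1,
      φ (-x) = ν (φ x))
    (ψ : X → EuclideanSpace ℝ (Fin (m + 1)))
    (hψcont : Continuous ψ)
    (hψmaps : ∀ y : X, ψ y ∈ Metric.sphere (0 : EuclideanSpace ℝ (Fin (m + 1))) 1)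
    (hψ : ∀ y : X, ψ (ν y) = - ψ y) :
    n ≤ m := by
  have hψ_ne (y : X) : ψ y ≠ 0 := ne_zero_of_mem_unit_sphere ⟨ψ y, hψmaps y⟩
  simpa [← finrank_eq_rank] using coindex_le_index_general ν hφcont hφ hψcont hψ_ne hψ
end

section
/- Let r ≥ 1 and let φ : ℤ/(2r+1) → ℤ/3 be a graph homomorphism from the odd cycle C_{2r+1} to K_3, i.e., φ(i+1) ≠ φ(i) for all i ∈ ℤ/(2r+1). For each i let ε_i ∈ {+1, −1} be the unique sign such that φ(i+1) − φ(i) equals ε_i modulo 3. Then the sum Σ_{i ∈ ℤ/(2r+1)} ε_i is divisible by 3, and the winding number w = (Σ_i ε_i)/3 is an odd integer satisfying 3·|w| ≤ 2r + 1. -/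
/-!
Around a closed walk the increments of `φ` telescope to zero, so `m` divides the sum of the signs.
A sum of `n` signs has the parity of `n` and absolute value at most `n`; as `m` is odd, dividing by
`m` preserves the parity.
-/

section SumLemmas

variable {ι : Type*}

theorem sum_comp_perm_sub_eq_zero {A : Type*} [AddCommGroup A] [Fintype ι]
    (σ : Equiv.Perm ι) (φ : ι → A) : ∑ i, (φ (σ i) - φ i) = 0 := by
  rw [Finset.sum_sub_distrib, Equiv.sum_comp, sub_self]

theorem dvd_sum_of_intCast_eq_comp_perm_sub [Fintype ι] {m : ℕ} (σ : Equiv.Perm ι)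
    {φ : ι → ZMod m} {ε : ι → ℤ} (hε : ∀ i, (ε i : ZMod m) = φ (σ i) - φ i) :
    (m : ℤ) ∣ ∑ i, ε i := by
  rw [← ZMod.intCast_zmod_eq_zero_iff_dvd, Int.cast_sum]
  simp_rw [hε]
  exact sum_comp_perm_sub_eq_zero σ φ

theorem odd_sum_iff_odd_card {s : Finset ι} {ε : ι → ℤ} (hε : ∀ i ∈ s, Odd (ε i)) :
    Odd (∑ i ∈ s, ε i) ↔ Odd s.card := by
  have hcast : ((∑ i ∈ s, ε i : ℤ) : ZMod 2) = s.card := by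
    rw [Int.cast_sum, Finset.sum_congr rfl fun i hi => (hε i hi).intCast_zmod_two,
      Finset.sum_const, nsmul_one]
  rw [← ZMod.intCast_eq_one_iff_odd, hcast, ZMod.natCast_eq_one_iff_odd]

theorem abs_sum_le_card {R : Type*} [Ring R] [LinearOrder R] [IsOrderedRing R]
    {s : Finset ι} {ε : ι → R} (hε : ∀ i ∈ s, |ε i| ≤ 1) : |∑ i ∈ s, ε i| ≤ s.card :=
  calc |∑ i ∈ s, ε i| ≤ ∑ i ∈ s, |ε i| := Finset.abs_sum_le_sum_abs ε s
    _ ≤ s.card • (1 : R) := Finset.sum_le_card_nsmul s _ 1 hε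
    _ = s.card := nsmul_one _

end SumLemmas

/-- A permutation `σ` presents a disjoint union of cycles, with edges from `i` to `σ i`, and `φ` is
a homomorphism from it to the cycle `C_m`, stepping forwards or backwards along the edge at `i`
according to `ε i`; then `(∑ i, ε i) / m` is the total winding number. -/
theorem winding_number_odd_cycle_general {ι : Type*} [Fintype ι] {m : ℕ} (hm : Odd m)
    (σ : Equiv.Perm ι) (φ : ι → ZMod m) (ε : ι → ℤ)
    (hε : ∀ i, (ε i = 1 ∨ ε i = -1) ∧ ((ε i : ZMod m) = φ (σ i) - φ i)) :
    (m : ℤ) ∣ (∑ i, ε i) ∧ (Odd ((∑ i, ε i) / m) ↔ Odd (Fintype.card ι)) ∧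
      m * |(∑ i, ε i) / m| ≤ (Fintype.card ι : ℤ) := by
  have hdvd : (m : ℤ) ∣ ∑ i, ε i := dvd_sum_of_intCast_eq_comp_perm_sub σ fun i => (hε i).2
  have hmul : (m : ℤ) * ((∑ i, ε i) / m) = ∑ i, ε i := Int.mul_ediv_cancel' hdvd
  have hparity : Odd (∑ i, ε i) ↔ Odd (Fintype.card ι) :=
    odd_sum_iff_odd_card fun i _ => by rcases (hε i).1 with h | h <;> simp [h]
  have hbound : |∑ i, ε i| ≤ (Fintype.card ι : ℤ) :=
    abs_sum_le_card fun i _ => by rcases (hε i).1 with h | h <;> simp [h]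
  have hquot : Odd (∑ i, ε i) ↔ Odd ((∑ i, ε i) / m) := by
    simpa [hmul, hm] using Int.odd_mul (m := m) (n := (∑ i, ε i) / m)
  rw [← hmul, abs_mul, Nat.abs_cast] at hbound
  exact ⟨hdvd, hquot.symm.trans hparity, hbound⟩

/-- **Winding numbers of homomorphisms `C_{2r+1} → K_3`**: let `φ` be a graph
homomorphism from the odd cycle `C_{2r+1}` to `K_3`, and for each vertex `i` let
`ε i ∈ {1, -1}` be the unique sign with `φ(i+1) - φ(i) ≡ ε i (mod 3)`. Then
`Σ ε i` is divisible by 3, and the winding number `(Σ ε i)/3` is an odd integer `w`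
with `3·|w| ≤ 2r + 1`. -/
theorem winding_number_odd_cycle (r : ℕ) (hr : 1 ≤ r)
    (φ : ZMod (2 * r + 1) → ZMod 3) (hφ : ∀ i, φ (i + 1) ≠ φ i)
    (ε : ZMod (2 * r + 1) → ℤ)
    (hε : ∀ i, (ε i = 1 ∨ ε i = -1) ∧ ((ε i : ZMod 3) = φ (i + 1) - φ i)) :
    (3 : ℤ) ∣ (∑ i, ε i) ∧ Odd ((∑ i, ε i) / 3) ∧
      3 * |(∑ i, ε i) / 3| ≤ 2 * (r : ℤ) + 1 := by
  simpa [ZMod.card] using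
    winding_number_odd_cycle_general (m := 3) (by decide) (Equiv.addRight 1) φ ε hε
end

section
/- Let f assign an integer f(m,n) to every pair of positive integers m, n, and suppose that: f(m,n) = 0 whenever m > n; f(1,n) = 0 for all n ≥ 1; f(n,n) = n! − 1 for all n ≥ 1; and f(m,n) = m·f(m−1, n−1) + (m−1)·f(m, n−1) for all n > m ≥ 2. Then for all n ≥ m ≥ 1, f(m,n) = Σ_{k=1}^{m−1} (−1)^{m+k+1} · C(m, k+1) · k^n, where C(m, k+1) denotes the binomial coefficient. -/
open Nat

/-!
The recurrence is the Leibniz rule in disguise: since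
`Δ^(m+1) (x · g) = (x + m + 1) · Δ^(m+1) g + (m + 1) · Δ^m g`, the numbers `(Δ^m x^n)(-1)` satisfy
the recurrence of `f`. So do the signs `(-1)^(m+n)`, and the difference of the two has the
prescribed values `0` at `m = 1` and `n! - 1` at `m = n`. Expanding `Δ^m` as an alternating sum
of shifts turns this difference into the closed form, `(-1)^(m+n)` being the term of the shift
by `0`.
-/

open Finset
open scoped fwdDiff

theorem fwdDiff_iter_succ_id_smul {R G : Type*} [Ring R] [AddCommGroup G] [Module R G]
    (h : R) (g : R → G) (m : ℕ) (x : R) :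
    (Δ_[h])^[m + 1] (fun y ↦ y • g y) x =
      (x + (m + 1) * h) • (Δ_[h])^[m + 1] g x + ((m + 1) * h) • (Δ_[h])^[m] g x := by
  induction m generalizing x with
  | zero =>
    simp only [zero_add, Function.iterate_one, Function.iterate_zero, id, fwdDiff, Nat.cast_zero,
      one_mul, add_smul, smul_sub]
    abel
  | succ m ih =>
    have iter_at_shift (k : ℕ) (y : R) :
        (Δ_[h])^[k] g (y + h) = (Δ_[h])^[k + 1] g y + (Δ_[h])^[k] g y := by
      rw [Function.iterate_succ_apply', fwdDiff, sub_add_cancel]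
    rw [Function.iterate_succ_apply', fwdDiff, ih, ih, iter_at_shift, iter_at_shift]
    push_cast
    simp only [add_mul, one_mul, add_smul, smul_add]
    abel

/-- The closed form of the wedge count `f(m,n)`, with values in an arbitrary commutative ring,
encoded as the `m`-th forward difference of `x ↦ x ^ n` at `-1` without the term of the shift
by `0`. -/
def wedgeCount (R : Type*) [CommRing R] (m n : ℕ) : R :=
  (Δ_[1])^[m] (fun x : R ↦ x ^ n) (-1) - (-1) ^ (m + n)

section wedgeCount

variable (R : Type*) [CommRing R]

theorem wedgeCount_zero_left (n : ℕ) : wedgeCount R 0 n = 0 := by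
  simp [wedgeCount]

theorem wedgeCount_succ_succ (m n : ℕ) :
    wedgeCount R (m + 1) (n + 1) =
      (m + 1) * wedgeCount R m n + m * wedgeCount R (m + 1) n := by
  have leibniz : (Δ_[1])^[m + 1] (fun x : R ↦ x ^ (n + 1)) (-1) =
      m * (Δ_[1])^[m + 1] (fun x : R ↦ x ^ n) (-1) +
        (m + 1) * (Δ_[1])^[m] (fun x : R ↦ x ^ n) (-1) := by
    simp only [pow_succ' _ n]
    simpa using fwdDiff_iter_succ_id_smul (1 : R) (fun x ↦ x ^ n) m (-1)
  rw [wedgeCount, wedgeCount, wedgeCount, leibniz]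
  ring

theorem wedgeCount_one_left {n : ℕ} (hn : n ≠ 0) : wedgeCount R 1 n = 0 := by
  obtain ⟨n, rfl⟩ := Nat.exists_eq_succ_of_ne_zero hn
  simpa [wedgeCount_zero_left] using wedgeCount_succ_succ R 0 n

theorem wedgeCount_self (n : ℕ) : wedgeCount R n n = (n ! : R) - 1 := by
  rw [wedgeCount, fwdDiff_iter_eq_factorial, Even.neg_one_pow ⟨n, rfl⟩, Pi.natCast_apply]

theorem wedgeCount_eq_sum_range (m n : ℕ) :
    wedgeCount R m n =
      ∑ k ∈ range m, (-1 : R) ^ (m + k + 1) * m.choose (k + 1) * (k : R) ^ n := by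
  have shift_term (k : ℕ) (hk : k ∈ range m) :
      ((-1 : ℤ) ^ (m - (k + 1)) * m.choose (k + 1)) • (-1 + (k + 1) • (1 : R)) ^ n =
        (-1 : R) ^ (m + k + 1) * m.choose (k + 1) * (k : R) ^ n := by
    have sign_eq : (-1 : R) ^ (m - (k + 1)) = (-1) ^ (m + k + 1) :=
      neg_one_pow_congr (by grind)
    simp [← sign_eq]
  rw [wedgeCount, fwdDiff_iter_eq_sum_shift, sum_range_succ', sum_congr rfl shift_term]
  simp [pow_add]

theorem wedgeCount_eq_sum_Icc (m : ℕ) {n : ℕ} (hn : n ≠ 0) :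
    wedgeCount R m n =
      ∑ k ∈ Icc 1 (m - 1), (-1 : R) ^ (m + k + 1) * m.choose (k + 1) * (k : R) ^ n := by
  rw [wedgeCount_eq_sum_range]
  refine (sum_subset (by grind) fun k hk hk' ↦ ?_).symm
  obtain rfl : k = 0 := by grind
  simp [hn]

end wedgeCount

theorem eq_of_triangular_recurrence {α : Type*} (F : ℕ → ℕ → α → α → α) {f g : ℕ → ℕ → α}
    (left : ∀ n, 1 ≤ n → f 1 n = g 1 n) (diag : ∀ n, 1 ≤ n → f n n = g n n)
    (hf : ∀ m n, 2 ≤ m → m < n → f m n = F m n (f (m - 1) (n - 1)) (f m (n - 1)))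
    (hg : ∀ m n, 2 ≤ m → m < n → g m n = F m n (g (m - 1) (n - 1)) (g m (n - 1)))
    {m n : ℕ} (hm : 1 ≤ m) (hmn : m ≤ n) : f m n = g m n := by
  induction n generalizing m with
  | zero => omega
  | succ n ih =>
    rcases hm.eq_or_lt with rfl | one_lt
    · exact left _ hmn
    rcases hmn.eq_or_lt with rfl | lt_succ
    · exact diag _ hm
    rw [hf m _ one_lt lt_succ, hg m _ one_lt lt_succ, Nat.add_sub_cancel,
      ih (Nat.le_sub_one_of_lt one_lt) (by omega), ih hm (Nat.le_of_lt_succ lt_succ)]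

theorem wedge_count_closed_form_general {R : Type*} [CommRing R] (f : ℕ → ℕ → R)
    (h1 : ∀ n : ℕ, 1 ≤ n → f 1 n = 0)
    (h2 : ∀ n : ℕ, 1 ≤ n → f n n = (n ! : R) - 1)
    (h3 : ∀ m n : ℕ, 2 ≤ m → m < n →
      f m n = m * f (m - 1) (n - 1) + (m - 1) * f m (n - 1))
    (m n : ℕ) (hm : 1 ≤ m) (hmn : m ≤ n) :
    f m n = ∑ k ∈ Icc 1 (m - 1),
      (-1 : R) ^ (m + k + 1) * (m.choose (k + 1)) * (k : R) ^ n := by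
  have left (n : ℕ) (hn : 1 ≤ n) : f 1 n = wedgeCount R 1 n := by
    rw [h1 n hn, wedgeCount_one_left R (by omega)]
  have diag (n : ℕ) (hn : 1 ≤ n) : f n n = wedgeCount R n n := by
    rw [h2 n hn, wedgeCount_self]
  have recurrence (m n : ℕ) (hm : 2 ≤ m) (hmn : m < n) : wedgeCount R m n =
      m * wedgeCount R (m - 1) (n - 1) + (m - 1) * wedgeCount R m (n - 1) := by
    obtain ⟨m, rfl⟩ : ∃ k, m = k + 1 := ⟨m - 1, by omega⟩
    obtain ⟨n, rfl⟩ : ∃ k, n = k + 1 := ⟨n - 1, by omega⟩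
    simpa using wedgeCount_succ_succ R m n
  rw [← wedgeCount_eq_sum_Icc R m (by omega)]
  exact eq_of_triangular_recurrence (fun m _ a b ↦ (m : R) * a + (m - 1) * b)
    left diag h3 recurrence hm hmn

/-- The closed-form solution of the recurrence satisfied by the numbers `f(m,n)` of
spheres in the wedge decomposition of `Hom(K_m, K_n)`: if `f(m,n) = 0` for `m > n`,
`f(1,n) = 0`, `f(n,n) = n! - 1`, and
`f(m,n) = m·f(m-1,n-1) + (m-1)·f(m,n-1)` for `n > m ≥ 2`, then
`f(m,n) = Σ_{k=1}^{m-1} (-1)^{m+k+1} · C(m,k+1) · k^n` for all `n ≥ m ≥ 1`. -/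
theorem wedge_count_closed_form (f : ℕ → ℕ → ℤ)
    (h0 : ∀ m n : ℕ, 1 ≤ m → 1 ≤ n → n < m → f m n = 0)
    (h1 : ∀ n : ℕ, 1 ≤ n → f 1 n = 0)
    (h2 : ∀ n : ℕ, 1 ≤ n → f n n = (n ! : ℤ) - 1)
    (h3 : ∀ m n : ℕ, 2 ≤ m → m < n →
      f m n = m * f (m - 1) (n - 1) + (m - 1) * f m (n - 1))
    (m n : ℕ) (hm : 1 ≤ m) (hmn : m ≤ n) :
    f m n = ∑ k ∈ Finset.Icc 1 (m - 1),
      (-1 : ℤ) ^ (m + k + 1) * (m.choose (k + 1)) * (k : ℤ) ^ n :=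
  wedge_count_closed_form_general f h1 h2 h3 m n hm hmn
end

section
/- (Brightwell–Winkler.) Let G be a finite simple graph containing at least one edge, and let d ≥ 1 be an integer. Suppose that for every finite simple graph T with maximum degree at most d, the following holds: the set of graph homomorphisms from T to G, with two homomorphisms related when they differ at exactly one vertex of T, is either empty or connected (any two homomorphisms are joined by a finite chain of such single-vertex changes). Then 2·χ(G) ≥ d + 4, i.e., χ(G) ≥ d/2 + 2. -/
/-!
Place the colors of an `n`-coloring of `G` at the vertices of a regular simplex in `ℝ^(n-1)`; this
is a vector coloring of `G`, in the sense that the vectors lie in the unit ball and have negative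
inner products along the edges. Among the vector colorings in dimension `n - 1`, first make the
margin `t` as large as possible and then the set of edges where it is attained as small as possible.
If `f` is the result and `v` is on a tight edge `vu`, then `-t • f v` is a convex combination of the
vectors of tight neighbours of `v`. By Carathéodory's theorem in the hyperplane through these
vectors, `u` and `n - 2` further neighbours suffice, and their vectors determine `f v`.

Walking along tight edges, with `u` the vertex just left, every step thus needs `n - 2` ways to
continue. A finite digraph with in- and outdegrees `n - 2` realises this prescription, and gives a
graph `T` of maximum degree `2 * (n - 2)` with a homomorphism to `G` whose vectors no sequence of
single-vertex changes can alter. As `T` may be taken bipartite, it also has two homomorphisms onto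
an edge of `G` that disagree everywhere, so `Hom₁(T, G)` is disconnected.
-/

open Module Set
open scoped InnerProductSpace Topology

universe u

section Caratheodory

variable {𝕜 E ι : Type*} [Field 𝕜] [LinearOrder 𝕜] [IsStrictOrderedRing 𝕜]

lemma exists_pos_forall_div_mul_le [Finite ι] {w c : ι → 𝕜} (hw : ∀ i, 0 ≤ w i)
    (hc : ∃ i, 0 < c i) : ∃ b, 0 < c b ∧ ∀ i, w b / c b * c i ≤ w i := by
  obtain ⟨b, hb, hmin⟩ := exists_min_image {i | 0 < c i} (fun i => w i / c i) (toFinite _) hc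
  refine ⟨b, hb, fun i => ?_⟩
  rcases le_or_gt (c i) 0 with hi | hi
  · exact (mul_nonpos_of_nonneg_of_nonpos (div_nonneg (hw b) (le_of_lt hb)) hi).trans (hw i)
  · exact (le_div_iff₀ hi).1 (hmin i hi)

variable [AddCommGroup E] [Module 𝕜 E]

-- The pivot step of the simplex method: `b` minimises the ratio of the coefficients of `p` and `u`.
lemma exists_mem_convexHull_range_update [Fintype ι] [DecidableEq ι] {z : ι → E} {w : ι → 𝕜}
    (hw : ∀ i, 0 ≤ w i) (hw₁ : ∑ i, w i = 1) {u : E} (hu : u ∈ affineSpan 𝕜 (range z)) :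
    ∃ b, ∑ i, w i • z i ∈ convexHull 𝕜 (range (Function.update z b u)) := by
  obtain ⟨c, hc₁, hc⟩ := eq_affineCombination_of_mem_affineSpan_of_fintype hu
  rw [Finset.univ.affineCombination_eq_linear_combination z c hc₁] at hc
  have hc_pos : ∃ i, 0 < c i := by
    by_contra! h
    linarith [Finset.sum_nonpos fun i (_ : i ∈ Finset.univ) => h i]
  obtain ⟨b, hb, hle⟩ := exists_pos_forall_div_mul_le hw hc_pos
  set θ := w b / c b
  have hθ : θ * c b = w b := div_mul_cancel₀ _ hb.ne'
  let v : ι → 𝕜 := fun i => w i - θ * c i + if i = b then θ else 0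
  have hv (i : ι) : v i • Function.update z b u i =
      w i • z i - θ • c i • z i + if i = b then θ • u else 0 := by
    rcases eq_or_ne i b with rfl | hi
    · simp [v, hθ, smul_smul]
    · simp [v, hi, sub_smul, mul_smul]
  have hvp : ∑ i, v i • Function.update z b u i = ∑ i, w i • z i := by
    simp only [hv, Finset.sum_add_distrib, Finset.sum_sub_distrib, ← Finset.smul_sum, ← hc,
      Fintype.sum_ite_eq', sub_add_cancel]
  refine ⟨b, hvp ▸ (convex_convexHull 𝕜 _).sum_mem (fun i _ => ?_) ?_
    fun i _ => subset_convexHull 𝕜 _ (mem_range_self i)⟩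
  · have hθ₀ : 0 ≤ θ := div_nonneg (hw b) hb.le
    exact add_nonneg (sub_nonneg.2 (hle i)) (by split_ifs <;> simp [hθ₀])
  · simp [v, Finset.sum_add_distrib, ← Finset.mul_sum, hw₁, hc₁]

theorem exists_finset_mem_convexHull_insert [FiniteDimensional 𝕜 E] {s : Set E} {p u : E}
    (hp : p ∈ convexHull 𝕜 s) (hu : u ∈ s) :
    ∃ B : Finset E, ↑B ⊆ s ∧ B.card ≤ finrank 𝕜 (vectorSpan 𝕜 s) ∧
      p ∈ convexHull 𝕜 (insert u (B : Set E)) := by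
  classical
  obtain ⟨ι, _, z, w, hzs, hind, hw, hw₁, rfl⟩ := eq_pos_convex_span_of_mem_convexHull hp
  have hcard := hind.card_le_finrank_succ
  have hspan := vectorSpan_mono 𝕜 hzs
  rcases (Submodule.finrank_mono hspan).lt_or_eq with hlt | heq
  · refine ⟨Finset.univ.image z, by simpa, Finset.card_image_le.trans ?_, ?_⟩
    · rw [Finset.card_univ]
      lia
    · exact (convex_convexHull 𝕜 _).sum_mem (fun i _ => (hw i).le) hw₁
        fun i _ => subset_convexHull 𝕜 _ (by simp)
  · have : Nonempty ι := by
      by_contra! h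
      simp at hw₁
    have haff : affineSpan 𝕜 (range z) = affineSpan 𝕜 s := by
      refine AffineSubspace.eq_of_direction_eq_of_nonempty_of_le ?_
        ((affineSpan_nonempty 𝕜).2 (range_nonempty z)) (affineSpan_mono 𝕜 hzs)
      simpa only [direction_affineSpan] using Submodule.eq_of_le_of_finrank_eq hspan heq
    obtain ⟨b, hb⟩ := exists_mem_convexHull_range_update (fun i => (hw i).le) hw₁
      (haff ▸ subset_affineSpan 𝕜 s hu)
    refine ⟨(Finset.univ.erase b).image z, ?_, Finset.card_image_le.trans ?_, convexHull_mono ?_ hb⟩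
    · exact (by simp : _ ⊆ range z).trans hzs
    · rw [Finset.card_erase_of_mem (Finset.mem_univ b), Finset.card_univ]
      lia
    · rintro _ ⟨i, rfl⟩
      rcases eq_or_ne i b with rfl | hi
      · simp
      · rw [Function.update_of_ne hi]
        exact mem_insert_of_mem _
          (Finset.mem_image_of_mem z (Finset.mem_erase.2 ⟨hi, Finset.mem_univ i⟩))

end Caratheodory

section Simplex

variable (ι : Type*) [Fintype ι]

/-- The vectors with coordinate sum zero, the linear span of the regular simplex on `ι`. -/
noncomputable abbrev sumZero : Submodule ℝ (EuclideanSpace ℝ ι) :=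
  (ℝ ∙ (WithLp.toLp 2 1 : EuclideanSpace ℝ ι))ᗮ

lemma finrank_sumZero_add_one [Nonempty ι] : finrank ℝ (sumZero ι) + 1 = Fintype.card ι := by
  have h := Submodule.finrank_add_finrank_orthogonal (ℝ ∙ (WithLp.toLp 2 1 : EuclideanSpace ℝ ι))
  rwa [finrank_span_singleton (by simp), finrank_euclideanSpace, add_comm] at h

variable {ι} [DecidableEq ι]

/-- The vertices of the regular simplex on `ι`, as the projections of the standard basis. -/
noncomputable def simplexVertex (i : ι) : sumZero ι :=
  (sumZero ι).orthogonalProjectionOnto (EuclideanSpace.single i 1)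

lemma norm_simplexVertex_le_one (i : ι) : ‖simplexVertex i‖ ≤ 1 :=
  ((sumZero ι).norm_orthogonalProjectionOnto_apply_le _).trans_eq (by simp)

lemma inner_simplexVertex {i j : ι} (hij : i ≠ j) :
    ⟪simplexVertex i, simplexVertex j⟫_ℝ = -(1 / Fintype.card ι) := by
  rw [simplexVertex, Submodule.inner_orthogonalProjectionOnto_eq_of_mem_right]
  simp [simplexVertex, Submodule.starProjection_singleton, hij.symm, EuclideanSpace.norm_sq_eq,
    EuclideanSpace.inner_single_left, EuclideanSpace.inner_single_right, inner_sub_right]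

end Simplex

lemma exists_mem_convexHull_forall_norm_sq_le_inner {E : Type*} [NormedAddCommGroup E]
    [InnerProductSpace ℝ E] {s : Set E} (hs : s.Finite) (hne : s.Nonempty) :
    ∃ q ∈ convexHull ℝ s, ∀ a ∈ s, ‖q‖ ^ 2 ≤ ⟪q, a⟫_ℝ := by
  have hconv := convex_convexHull ℝ s
  obtain ⟨q, hq, hmin⟩ := exists_norm_eq_iInf_of_complete_convex hne.convexHull
    (hs.isCompact_convexHull (𝕜 := ℝ)).isComplete hconv 0
  refine ⟨q, hq, fun a ha => ?_⟩
  have := (norm_eq_iInf_iff_real_inner_le_zero hconv hq).1 hmin a (subset_convexHull ℝ s ha)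
  rw [zero_sub, inner_neg_left, inner_sub_right, real_inner_self_eq_norm_sq] at this
  linarith

section VectorColoring

variable {V E : Type*} [NormedAddCommGroup E] [InnerProductSpace ℝ E] {G : SimpleGraph V}
  {t : ℝ} {f : V → E}

/-- A vector coloring of `G` with margin `t`: vectors of the unit ball whose inner products along
the edges are at most `-t`. -/
structure IsVectorColoring (G : SimpleGraph V) (t : ℝ) (f : V → E) : Prop where
  norm_le_one : ∀ v, ‖f v‖ ≤ 1
  inner_le : ∀ ⦃x y⦄, G.Adj x y → ⟪f x, f y⟫_ℝ ≤ -t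

/-- The edges along which a vector coloring attains its margin. -/
def tightGraph (G : SimpleGraph V) (t : ℝ) (f : V → E) : SimpleGraph V where
  Adj x y := G.Adj x y ∧ ⟪f x, f y⟫_ℝ = -t
  symm := ⟨fun _ _ h => ⟨h.1.symm, by rw [real_inner_comm, h.2]⟩⟩
  loopless := ⟨fun _ h => h.1.ne rfl⟩

lemma isVectorColoring_simplexVertex {ι : Type*} [Fintype ι] [DecidableEq ι] (c : G.Coloring ι) :
    IsVectorColoring G (1 / Fintype.card ι) fun v => simplexVertex (c v) where
  norm_le_one v := norm_simplexVertex_le_one (c v)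
  inner_le _ _ h := (inner_simplexVertex (c.valid h)).le

lemma IsVectorColoring.le_one (hf : IsVectorColoring G t f) {x y : V} (hxy : G.Adj x y) :
    t ≤ 1 := by
  have h₁ := (abs_le.1 (abs_real_inner_le_norm (f x) (f y))).1
  have h₂ := mul_le_one₀ (hf.norm_le_one x) (norm_nonneg _) (hf.norm_le_one y)
  linarith [hf.inner_le hxy]

lemma IsVectorColoring.ne_of_adj (hf : IsVectorColoring G t f) (ht : 0 < t) {x y : V}
    (hxy : G.Adj x y) : f x ≠ f y := fun h => by
  have := hf.inner_le hxy
  rw [h] at this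
  linarith [real_inner_self_nonneg (x := f y)]

theorem IsVectorColoring.exists_maximal [Finite V] [FiniteDimensional ℝ E]
    (hf : IsVectorColoring G t f) (hG : ∃ x y, G.Adj x y) :
    ∃ t' ≥ t, Maximal (fun r => ∃ g : V → E, IsVectorColoring G r g) t' := by
  have := Fintype.ofFinite V
  obtain ⟨x, y, hxy⟩ := hG
  let S : Set (ℝ × (V → E)) := {p | t ≤ p.1 ∧ IsVectorColoring G p.1 p.2}
  have hS : IsCompact S := by
    refine (isCompact_Icc.prod (isCompact_univ_pi fun _ : V =>
      isCompact_closedBall (0 : E) 1)).of_isClosed_subset (s := Icc t 1 ×ˢ _) ?_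
      fun p hp => ⟨⟨hp.1, hp.2.le_one hxy⟩, fun v _ => by simpa using hp.2.norm_le_one v⟩
    have : S = {p | t ≤ p.1} ∩ ((⋂ v, {p | ‖p.2 v‖ ≤ 1}) ∩
        ⋂ (a) (b) (_ : G.Adj a b), {p | ⟪p.2 a, p.2 b⟫_ℝ ≤ -p.1}) := by
      ext p
      simp only [S, mem_inter_iff, mem_iInter, mem_ofPred_eq]
      exact and_congr_right fun _ => ⟨fun h => ⟨h.1, h.2⟩, fun h => ⟨h.1, h.2⟩⟩
    rw [this]
    refine (isClosed_le (by fun_prop) (by fun_prop)).inter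
      ((isClosed_iInter fun v => isClosed_le (by fun_prop) (by fun_prop)).inter
      (isClosed_iInter fun a => isClosed_iInter fun b => isClosed_iInter fun _ =>
        isClosed_le (by fun_prop) (by fun_prop)))
  obtain ⟨⟨t', g⟩, hg, hmax⟩ := hS.exists_isMaxOn ⟨(t, f), le_rfl, hf⟩ continuous_fst.continuousOn
  exact ⟨t', hg.1, ⟨g, hg.2⟩, fun r ⟨k, hk⟩ hr => hmax (a := (r, k)) ⟨hg.1.trans hr, hk⟩⟩

lemma IsVectorColoring.exists_tightGraph_adj [Finite V] (hf : IsVectorColoring G t f)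
    (ht : Maximal (fun r => ∃ g : V → E, IsVectorColoring G r g) t) :
    ∃ x y, (tightGraph G t f).Adj x y := by
  by_contra! hne
  have hsmall : ∀ᶠ ε : ℝ in 𝓝[>] 0, ∀ x y, G.Adj x y → ⟪f x, f y⟫_ℝ ≤ -(t + ε) := by
    simp only [Filter.eventually_all]
    intro x y hxy
    have hlt : ⟪f x, f y⟫_ℝ < -(t + 0) := by
      rw [add_zero]
      exact (hf.inner_le hxy).lt_of_ne fun h => hne x y ⟨hxy, h⟩
    have hcont : Continuous fun ε : ℝ => -(t + ε) := by fun_prop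
    exact nhdsWithin_le_nhds ((hcont.continuousAt.eventually_const_lt hlt).mono fun _ => le_of_lt)
  obtain ⟨ε, hε, hpos⟩ := (hsmall.and self_mem_nhdsWithin).exists
  have hle : t + ε ≤ t := ht.2 ⟨f, hf.norm_le_one, hε⟩ (le_add_of_nonneg_right (le_of_lt hpos))
  exact (lt_add_of_pos_right t hpos).not_ge hle

lemma IsVectorColoring.exists_tightGraph_lt_of_inner_lt (hf : IsVectorColoring G t f) {v w : V}
    (hvw : (tightGraph G t f).Adj v w) {z : E} (hz : ‖z‖ ≤ 1)
    (hlt : ∀ u, G.Adj v u → ⟪z, f u⟫_ℝ < -t) :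
    ∃ g : V → E, IsVectorColoring G t g ∧ tightGraph G t g < tightGraph G t f := by
  classical
  have hloose {a b : V} (hab : G.Adj a b) (h : a = v ∨ b = v) :
      ⟪Function.update f v z a, Function.update f v z b⟫_ℝ < -t := by
    rcases h with rfl | rfl
    · simpa [hab.ne'] using hlt b hab
    · simpa [hab.ne, real_inner_comm] using hlt a hab.symm
  have hfixed {a b : V} (h : ¬(a = v ∨ b = v)) :
      ⟪Function.update f v z a, Function.update f v z b⟫_ℝ = ⟪f a, f b⟫_ℝ := by
    rw [not_or] at h
    rw [Function.update_of_ne h.1, Function.update_of_ne h.2]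
  refine ⟨Function.update f v z, ⟨fun u => ?_, fun a b hab => ?_⟩,
    lt_of_le_of_ne (fun a b hab => ?_) fun heq => ?_⟩
  · rcases eq_or_ne u v with rfl | hu
    · simpa using hz
    · simpa [hu] using hf.norm_le_one u
  · by_cases h : a = v ∨ b = v
    · exact (hloose hab h).le
    · exact (hfixed h).trans_le (hf.inner_le hab)
  · have h : ¬(a = v ∨ b = v) := fun h => (hloose hab.1 h).ne hab.2
    exact ⟨hab.1, (hfixed h).symm.trans hab.2⟩
  · rw [← heq] at hvw
    exact (hloose hvw.1 (.inl rfl)).ne hvw.2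

-- If `y` loosens every tight edge at `v`, so does moving `f v` slightly towards `y`, and a small
-- move creates no new tight edge.
lemma IsVectorColoring.exists_tightGraph_lt [Finite V] (hf : IsVectorColoring G t f) {v w : V}
    (hvw : (tightGraph G t f).Adj v w) {y : E} (hy : ‖y‖ ≤ 1)
    (hlt : ∀ u, (tightGraph G t f).Adj v u → ⟪y, f u⟫_ℝ < -t) :
    ∃ g : V → E, IsVectorColoring G t g ∧ tightGraph G t g < tightGraph G t f := by
  let z (ε : ℝ) : E := (1 - ε) • f v + ε • y
  have hz (ε : ℝ) (u : V) : ⟪z ε, f u⟫_ℝ = (1 - ε) * ⟪f v, f u⟫_ℝ + ε * ⟪y, f u⟫_ℝ := by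
    simp only [z, inner_add_left, real_inner_smul_left]
  have hsmall : ∀ᶠ ε : ℝ in 𝓝[>] 0, ∀ u, G.Adj v u → ⟪z ε, f u⟫_ℝ < -t := by
    simp only [Filter.eventually_all]
    intro u hvu
    rcases (hf.inner_le hvu).lt_or_eq with hloose | htight
    · have hcont : Continuous fun ε : ℝ => ⟪z ε, f u⟫_ℝ := by fun_prop
      exact nhdsWithin_le_nhds (hcont.continuousAt.eventually_lt_const (by simpa [z] using hloose))
    · filter_upwards [self_mem_nhdsWithin] with ε (hε : 0 < ε)
      rw [hz, htight]
      nlinarith [hlt u ⟨hvu, htight⟩]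
  obtain ⟨ε, hε, hε₀, hε₁⟩ := (hsmall.and (Ioo_mem_nhdsGT one_pos)).exists
  refine hf.exists_tightGraph_lt_of_inner_lt hvw (z := z ε) ?_ hε
  simpa using convex_closedBall (0 : E) 1 (by simpa using hf.norm_le_one v) (by simpa using hy)
    (sub_nonneg.2 hε₁.le) hε₀.le (sub_add_cancel 1 ε)

end VectorColoring

section Rigidity

variable {V E : Type*} [NormedAddCommGroup E] [InnerProductSpace ℝ E] {G : SimpleGraph V}
  {t : ℝ} {f : V → E}

lemma inner_eq_of_mem_convexHull {s : Set E} {x p : E} {r : ℝ} (hs : ∀ a ∈ s, ⟪x, a⟫_ℝ = r)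
    (hp : p ∈ convexHull ℝ s) : ⟪x, p⟫_ℝ = r :=
  convexHull_min hs (convex_hyperplane (innerₗ E x).isLinear r) hp

lemma inner_le_of_mem_convexHull {s : Set E} {x p : E} {r : ℝ} (hs : ∀ a ∈ s, ⟪x, a⟫_ℝ ≤ r)
    (hp : p ∈ convexHull ℝ s) : ⟪x, p⟫_ℝ ≤ r :=
  convexHull_min hs (convex_halfSpace_le (innerₗ E x).isLinear r) hp

lemma finrank_vectorSpan_lt_of_inner_eq [FiniteDimensional ℝ E] {s : Set E} {x : E} {r : ℝ}
    (hx : x ≠ 0) (hs : ∀ a ∈ s, ⟪x, a⟫_ℝ = r) : finrank ℝ (vectorSpan ℝ s) < finrank ℝ E := by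
  refine Submodule.finrank_lt (ne_of_lt ?_)
  refine lt_top_iff_ne_top.2 fun h => ?_
  have hle : vectorSpan ℝ s ≤ (ℝ ∙ x)ᗮ := by
    rw [vectorSpan_def, Submodule.span_le]
    rintro _ ⟨a, ha, b, hb, rfl⟩
    simp [Submodule.mem_orthogonal_singleton_iff_inner_right, inner_sub_right, hs a ha, hs b hb]
  rw [h, top_le_iff, Submodule.orthogonal_eq_top_iff, Submodule.span_singleton_eq_bot] at hle
  exact hx hle

lemma eq_of_inner_le_of_neg_smul_mem_convexHull {s : Set E} {x y : E} (ht : 0 < t)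
    (hx : ‖x‖ ≤ 1) (hy : ‖y‖ ≤ 1) (hmem : -(t • x) ∈ convexHull ℝ s)
    (hs : ∀ a ∈ s, ⟪y, a⟫_ℝ ≤ -t) : y = x := by
  have hyx : 1 ≤ ⟪y, x⟫_ℝ := by
    have h := inner_le_of_mem_convexHull hs hmem
    rw [inner_neg_right, real_inner_smul_right, neg_le_neg_iff] at h
    exact le_of_mul_le_mul_left (by rwa [mul_one]) ht
  rw [← sub_eq_zero, ← norm_le_zero_iff]
  nlinarith [norm_sub_sq_real y x, norm_nonneg x, norm_nonneg y]

theorem neg_smul_mem_convexHull_of_minimalFor [Finite V] (ht : 0 ≤ t)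
    (hf : MinimalFor (IsVectorColoring G t) (tightGraph G t) f) {v w : V}
    (hvw : (tightGraph G t f).Adj v w) :
    -(t • f v) ∈ convexHull ℝ (f '' (tightGraph G t f).neighborSet v) := by
  obtain ⟨q, hq, hqmin⟩ := exists_mem_convexHull_forall_norm_sq_le_inner
    (toFinite (f '' (tightGraph G t f).neighborSet v)) ⟨_, mem_image_of_mem f hvw⟩
  have hqt : ‖q‖ ≤ t := by
    by_contra! hlt
    have hq₀ : 0 < ‖q‖ := ht.trans_lt hlt
    obtain ⟨g, hg, hgf⟩ := hf.1.exists_tightGraph_lt hvw (y := -(‖q‖⁻¹ • q))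
      (by rw [norm_neg, norm_smul, norm_inv, norm_norm]; exact inv_mul_le_one)
      fun u hu => by
        rw [inner_neg_left, real_inner_smul_left, neg_lt_neg_iff, lt_inv_mul_iff₀ hq₀]
        nlinarith [hqmin _ (mem_image_of_mem f hu)]
    exact hgf.not_ge (hf.2 hg hgf.le)
  have hvq : ⟪f v, q⟫_ℝ = -t := inner_eq_of_mem_convexHull
    (by rintro _ ⟨u, hu, rfl⟩; exact hu.2) hq
  have hsq : ‖q + t • f v‖ ^ 2 ≤ 0 := calc
    ‖q + t • f v‖ ^ 2 = ‖q‖ ^ 2 + 2 * (t * ⟪f v, q⟫_ℝ) + t ^ 2 * ‖f v‖ ^ 2 := by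
      rw [norm_add_sq_real, real_inner_smul_right, real_inner_comm, norm_smul, mul_pow,
        Real.norm_eq_abs, sq_abs]
    _ ≤ t ^ 2 + 2 * (t * -t) + t ^ 2 * 1 ^ 2 := by
      rw [hvq]
      gcongr
      exact hf.1.norm_le_one v
    _ = 0 := by ring
  have hqv : q + t • f v = 0 := by simpa using hsq.antisymm (sq_nonneg _)
  rwa [← eq_neg_of_add_eq_zero_left hqv]

lemma exists_fin_image_subset_range {α β : Type*} {s : Set α} {f : α → β} {B : Finset β}
    (hB : ↑B ⊆ f '' s) (hs : s.Nonempty) {K : ℕ} (hK : B.card ≤ K) :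
    ∃ C : Fin K → α, (∀ i, C i ∈ s) ∧ ↑B ⊆ range (f ∘ C) := by
  choose g hg hfg using hB
  obtain ⟨u, hu⟩ := hs
  obtain ⟨e⟩ : Nonempty (B ↪ Fin K) :=
    Function.Embedding.nonempty_of_card_le (by simpa using hK)
  refine ⟨Function.extend e (fun b => g b.2) fun _ => u, fun i => ?_, fun b hb => ⟨e ⟨b, hb⟩, ?_⟩⟩
  · by_cases hi : ∃ b, e b = i
    · obtain ⟨b, rfl⟩ := hi
      rw [e.injective.extend_apply]
      exact hg b.2
    · rwa [Function.extend_apply' _ _ _ hi]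
  · rw [Function.comp_apply, e.injective.extend_apply, hfg]

theorem exists_forall_inner_le_imp_eq [Finite V] [FiniteDimensional ℝ E] {K : ℕ}
    (hK : finrank ℝ E ≤ K + 1) (ht : 0 < t)
    (hf : MinimalFor (IsVectorColoring G t) (tightGraph G t) f) {v u : V}
    (hvu : (tightGraph G t f).Adj v u) :
    ∃ C : Fin K → V, (∀ i, (tightGraph G t f).Adj v (C i)) ∧
      ∀ y, ‖y‖ ≤ 1 → (∀ a ∈ insert u (range C), ⟪y, f a⟫_ℝ ≤ -t) → y = f v := by
  set S := (tightGraph G t f).neighborSet v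
  have hv : f v ≠ 0 := fun h => by
    have := hvu.2
    rw [h, inner_zero_left] at this
    linarith
  have hdim : finrank ℝ (vectorSpan ℝ (f '' S)) < finrank ℝ E :=
    finrank_vectorSpan_lt_of_inner_eq hv (r := -t) (by rintro _ ⟨a, ha, rfl⟩; exact ha.2)
  obtain ⟨B, hBS, hBcard, hB⟩ := exists_finset_mem_convexHull_insert
    (neg_smul_mem_convexHull_of_minimalFor ht.le hf hvu) (mem_image_of_mem f hvu)
  obtain ⟨C, hCS, hBC⟩ := exists_fin_image_subset_range hBS ⟨u, hvu⟩
    (hBcard.trans (Nat.le_of_lt_succ (hdim.trans_le hK)))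
  refine ⟨C, hCS, fun y hy hle =>
    eq_of_inner_le_of_neg_smul_mem_convexHull ht (hf.1.norm_le_one v) hy hB ?_⟩
  rintro a (rfl | ha)
  · exact hle u (mem_insert _ _)
  · obtain ⟨i, rfl⟩ := hBC ha
    exact hle (C i) (mem_insert_of_mem _ (mem_range_self i))

end Rigidity

section Lift

open scoped Matrix

-- A stationary vector of a stochastic matrix may be replaced by its entrywise absolute value.
lemma exists_nat_vecMul_eq_smul {S : Type*} [Fintype S] [Nonempty S] {A : Matrix S S ℕ} {k : ℕ}
    (hA : ∀ s, ∑ t, A s t = k) : ∃ n : S → ℕ, n ≠ 0 ∧ n ᵥ* A = k • n := by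
  classical
  let M : Matrix S S ℤ := A.map (↑) - Matrix.diagonal fun _ => (k : ℤ)
  have hdet : M.det = 0 := by
    refine Matrix.exists_mulVec_eq_zero_iff.1 ⟨1, one_ne_zero, ?_⟩
    ext s
    rw [Matrix.sub_mulVec, Pi.sub_apply, Matrix.mulVec_diagonal, ← hA s]
    simp [Matrix.mulVec, dotProduct]
  obtain ⟨v, hv₀, hv⟩ := Matrix.exists_vecMul_eq_zero_iff.2 hdet
  have hle (t : S) : k * (v t).natAbs ≤ ∑ s, (v s).natAbs * A s t := by
    have ht : ∑ s, v s * A s t = k * v t := by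
      have h := congr_fun hv t
      rw [Matrix.vecMul_sub, Pi.sub_apply, Matrix.vecMul_diagonal, Pi.zero_apply, sub_eq_zero] at h
      rw [mul_comm, ← h]
      rfl
    calc k * (v t).natAbs = (∑ s, v s * A s t).natAbs := by
          rw [ht, Int.natAbs_mul, Int.natAbs_natCast]
      _ ≤ ∑ s, (v s * A s t).natAbs := Int.natAbs_sum_le _ _
      _ = ∑ s, (v s).natAbs * A s t := by simp only [Int.natAbs_mul, Int.natAbs_natCast]
  have hsum : ∑ t, k * (v t).natAbs = ∑ t, ∑ s, (v s).natAbs * A s t := by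
    rw [Finset.sum_comm]
    simp only [← Finset.mul_sum, hA, mul_comm k]
  refine ⟨fun s => (v s).natAbs, fun h => hv₀ (funext fun s => ?_), funext fun t => ?_⟩
  · simpa using congr_fun h s
  · exact ((Finset.sum_eq_sum_iff_of_le fun t _ => hle t).1 hsum t (Finset.mem_univ t)).symm

lemma card_sigma_fin_prod_fiber {S ι T : Type*} [Fintype S] [Fintype ι] [DecidableEq T]
    (n : S → ℕ) (g : S → ι → T) (t : T) :
    Fintype.card {p : (Σ s, Fin (n s)) × ι // g p.1.1 p.2 = t} =
      ∑ s, n s * Fintype.card {i // g s i = t} := by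
  let e : {p : (Σ s, Fin (n s)) × ι // g p.1.1 p.2 = t} ≃ Σ s, Fin (n s) × {i // g s i = t} :=
    ⟨fun p => ⟨p.1.1.1, p.1.1.2, p.1.2, p.2⟩, fun q => ⟨(⟨q.1, q.2.1⟩, q.2.2.1), q.2.2.2⟩,
      fun _ => rfl, fun _ => rfl⟩
  simp [Fintype.card_congr e]

theorem exists_biregular_lift {S : Type u} {ι : Type*} [Finite S] [Nonempty S] [Finite ι]
    (next : S → ι → S) :
    ∃ (N : Type u) (_ : Finite N) (_ : Nonempty N) (state : N → S) (e : N × ι ≃ N × ι),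
      ∀ x i, state (e (x, i)).1 = next (state x) i := by
  classical
  have := Fintype.ofFinite S
  have := Fintype.ofFinite ι
  obtain ⟨n, hn₀, hn⟩ := exists_nat_vecMul_eq_smul
    (A := fun s t => Fintype.card {i // next s i = t}) (k := Fintype.card ι) fun s => by
      rw [← Fintype.card_sigma]
      exact Fintype.card_congr (Equiv.sigmaFiberEquiv (next s))
  let N := Σ s, Fin (n s)
  have hcard (t : S) : Fintype.card {p : N × ι // next p.1.1 p.2 = t} =
      Fintype.card {p : N × ι // p.1.1 = t} := by
    rw [card_sigma_fin_prod_fiber n next t, card_sigma_fin_prod_fiber n (fun s _ => s) t]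
    refine (congr_fun hn t).trans ?_
    simp [Fintype.card_subtype, Finset.filter_const, apply_ite, mul_comm]
  let e : N × ι ≃ N × ι := Equiv.ofFiberEquiv fun t => Fintype.equivOfCardEq (hcard t)
  obtain ⟨s, hs⟩ := Function.ne_iff.1 hn₀
  refine ⟨N, inferInstance, ⟨s, 0, Nat.pos_of_ne_zero hs⟩, Sigma.fst, e, fun x i => ?_⟩
  exact Equiv.ofFiberEquiv_map (fun t => Fintype.equivOfCardEq (hcard t)) (x, i)

end Lift

section ShiftGraph

variable {N ι : Type*}

/-- The graph on `N` joining `x` to `y` when `e` moves some port of one of them to a port of the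
other; the elements of `ι` are the ports of every vertex. -/
def shiftGraph (e : N × ι ≃ N × ι) : SimpleGraph N :=
  SimpleGraph.fromRel fun x y => ∃ i, (e (x, i)).1 = y

lemma ncard_neighborSet_shiftGraph_le [Finite ι] (e : N × ι ≃ N × ι) (x : N) :
    ((shiftGraph e).neighborSet x).ncard ≤ 2 * Nat.card ι := by
  have hsub : (shiftGraph e).neighborSet x ⊆
      range (fun i => (e (x, i)).1) ∪ range fun i => (e.symm (x, i)).1 := by
    rintro y ⟨-, ⟨i, rfl⟩ | ⟨i, rfl⟩⟩
    · exact .inl ⟨i, rfl⟩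
    · exact .inr ⟨(e (y, i)).2, by simp⟩
  have hrange (g : ι → N) : (range g).ncard ≤ Nat.card ι := by
    rw [← image_univ, ← ncard_univ]
    exact ncard_image_le
  calc ((shiftGraph e).neighborSet x).ncard
    _ ≤ _ := ncard_le_ncard hsub (toFinite _)
    _ ≤ _ := ncard_union_le _ _
    _ ≤ Nat.card ι + Nat.card ι := add_le_add (hrange _) (hrange _)
    _ = 2 * Nat.card ι := (two_mul _).symm

-- The vertices are labelled by darts: `d.fst` is the image in `H`, and `d.snd` is the image of the
-- vertices from which one arrives.
theorem exists_hom_forall_exists_dart {V : Type u} {H : SimpleGraph V} [Finite V] [Finite ι]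
    [Nonempty ι] (hH : ∃ x y, H.Adj x y) {C : H.Dart → ι → V} (hC : ∀ d i, H.Adj d.fst (C d i)) :
    ∃ (N : Type u) (_ : Finite N) (_ : Nonempty N) (T : SimpleGraph N) (φ : T →g H),
      (∀ x, (T.neighborSet x).ncard ≤ 2 * Nat.card ι) ∧
      ∀ x, ∃ d : H.Dart, d.fst = φ x ∧ insert d.snd (range (C d)) ⊆ φ '' T.neighborSet x := by
  obtain ⟨v, w, hvw⟩ := hH
  have : Nonempty H.Dart := ⟨⟨(v, w), hvw⟩⟩
  have : Finite H.Dart := .of_injective _ SimpleGraph.Dart.toProd_injective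
  obtain ⟨N, _, _, state, e, he⟩ :=
    exists_biregular_lift fun d i => (⟨(C d i, d.fst), (hC d i).symm⟩ : H.Dart)
  have hfst (x : N) (i : ι) : (state (e (x, i)).1).fst = C (state x) i := by rw [he]
  have hsnd (x : N) (i : ι) : (state (e (x, i)).1).snd = (state x).fst := by rw [he]
  have hadj (x : N) (i : ι) : H.Adj (state x).fst (state (e (x, i)).1).fst :=
    hfst x i ▸ hC (state x) i
  have hshift (x : N) (i : ι) : (shiftGraph e).Adj x (e (x, i)).1 :=
    ⟨fun h => (hadj x i).ne (by rw [← h]), .inl ⟨i, rfl⟩⟩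
  refine ⟨N, ‹_›, ‹_›, shiftGraph e, ⟨fun x => (state x).fst, ?_⟩,
    ncard_neighborSet_shiftGraph_le e, fun x => ⟨state x, rfl, ?_⟩⟩
  · rintro x y ⟨-, ⟨i, rfl⟩ | ⟨i, rfl⟩⟩
    exacts [hadj x i, (hadj y i).symm]
  · rintro a (rfl | ⟨i, rfl⟩)
    · obtain ⟨⟨y, j⟩, hy⟩ := e.surjective (x, Classical.arbitrary ι)
      obtain rfl : (e (y, j)).1 = x := by rw [hy]
      exact ⟨y, (hshift y j).symm, (hsnd y j).symm⟩
    · exact ⟨(e (x, i)).1, hshift x i, hfst x i⟩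

end ShiftGraph

section Reconfiguration

variable {V N X : Type*} {T : SimpleGraph N} {G : SimpleGraph V} {c : V → X}

/-- The homomorphisms differ at exactly one vertex: adjacency in `Hom₁(T, G)`. -/
def SingleChange (φ ψ : T →g G) : Prop :=
  ∃ x, φ x ≠ ψ x ∧ ∀ y, y ≠ x → φ y = ψ y

/-- `Hom₁(T, G)` is empty or connected. -/
def ReconfigConnected (T : SimpleGraph N) (G : SimpleGraph V) : Prop :=
  ∀ φ ψ : T →g G, Relation.ReflTransGen SingleChange φ ψ

/-- No vertex of `G` placed at a vertex `s` of `T`, while the neighbours of `s` keep their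
`c`-values, has a `c`-value different from that of `φ s`. -/
def IsFrozenUnder (c : V → X) (φ : T →g G) : Prop :=
  ∀ s p, (∀ s', T.Adj s s' → ∃ q, G.Adj p q ∧ c q = c (φ s')) → c p = c (φ s)

lemma ReconfigConnected.of_iso {N' : Type*} {T' : SimpleGraph N'} (e : T ≃g T')
    (h : ReconfigConnected T' G) : ReconfigConnected T G := fun φ ψ => by
  have hlift := (h (φ.comp e.symm.toHom) (ψ.comp e.symm.toHom)).lift (p := SingleChange)
    (fun f => f.comp e.toHom) fun f g ⟨x, hne, heq⟩ =>
      ⟨e.symm x, by simpa using hne, fun y hy => heq (e y) fun h => hy (by simp [← h])⟩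
  have hcomp (f : T →g G) : (f.comp e.symm.toHom).comp e.toHom = f := by
    ext x
    simp
  simpa only [Function.onFun, hcomp] using hlift

lemma ReconfigConnected.of_forall_fin [Finite N] {d : ℕ}
    (h : ∀ (m : ℕ) (T' : SimpleGraph (Fin m)),
      (∀ v, (T'.neighborSet v).ncard ≤ d) → ReconfigConnected T' G)
    (hT : ∀ x, (T.neighborSet x).ncard ≤ d) : ReconfigConnected T G := by
  have := Fintype.ofFinite N
  let e := T.overFinIso rfl
  refine .of_iso e (h _ _ fun v => ?_)
  obtain ⟨x, rfl⟩ := e.surjective v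
  exact (ncard_congr' (e.mapNeighborSet x)).symm.trans_le (hT x)

lemma IsFrozenUnder.eq_of_reflTransGen {φ ψ : T →g G} (hφ : IsFrozenUnder c φ)
    (h : Relation.ReflTransGen SingleChange φ ψ) (s : N) : c (ψ s) = c (φ s) := by
  induction h generalizing s with
  | refl => rfl
  | @tail χ ω _ hstep ih =>
    obtain ⟨x, -, heq⟩ := hstep
    rcases eq_or_ne s x with rfl | hs
    · exact hφ s _ fun s' hs' => ⟨ω s', ω.map_adj hs', by rw [← heq s' hs'.ne', ih]⟩
    · rw [← heq s hs, ih]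

theorem IsFrozenUnder.not_reconfigConnected [Nonempty N] {φ : T →g G} (hφ : IsFrozenUnder c φ)
    (hc : ∀ ⦃p q⦄, G.Adj p q → c p ≠ c q) (hG : ∃ p q, G.Adj p q) (hT : T.IsBipartite) :
    ¬ReconfigConnected T G := by
  intro h
  obtain ⟨p, q, hpq⟩ := hG
  obtain ⟨b⟩ := hT
  let s : N := Classical.arbitrary N
  let fold (p q : V) (hpq : G.Adj p q) : T →g G :=
    ⟨fun x => if b x = b s then p else q, fun {x y} hxy => by
      have := b.valid hxy
      split_ifs <;> first | exact hpq | exact hpq.symm | lia⟩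
  refine hc hpq ?_
  have h₁ := hφ.eq_of_reflTransGen (h φ (fold p q hpq)) s
  have h₂ := hφ.eq_of_reflTransGen (h φ (fold q p hpq.symm)) s
  simpa [fold] using h₁.trans h₂.symm

/-- The homomorphism `φ` precomposed with the covering map of the bipartite double cover. -/
def doubleCoverHom (φ : T →g G) : T.bipartiteDoubleCover →g G where
  toFun := Sum.elim φ φ
  map_rel' {x y} h := by
    rcases x with x | x <;> rcases y with y | y <;> first | exact h.elim | exact φ.map_adj h

lemma IsFrozenUnder.doubleCoverHom {φ : T →g G} (hφ : IsFrozenUnder c φ) :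
    IsFrozenUnder c (doubleCoverHom φ) := by
  rintro (s | s) p hp
  · exact hφ s p fun s' hs' => hp (.inr s') hs'
  · exact hφ s p fun s' hs' => hp (.inl s') hs'

lemma ncard_neighborSet_bipartiteDoubleCover (x : N ⊕ N) :
    (T.bipartiteDoubleCover.neighborSet x).ncard = (T.neighborSet (x.elim id id)).ncard := by
  rcases x with x | x
  · have h : T.bipartiteDoubleCover.neighborSet (.inl x) = .inr '' T.neighborSet x := by
      ext (y | y) <;> simp
    rw [h, ncard_image_of_injective _ Sum.inr_injective, Sum.elim_inl, id]
  · have h : T.bipartiteDoubleCover.neighborSet (.inr x) = .inl '' T.neighborSet x := by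
      ext (y | y) <;> simp
    rw [h, ncard_image_of_injective _ Sum.inl_injective, Sum.elim_inr, id]

end Reconfiguration

section Main

variable {V : Type u} {G : SimpleGraph V}

theorem exists_minimalFor_tightGraph [Finite V] {K : ℕ} (hG : ∃ x y, G.Adj x y)
    (c : G.Coloring (Fin (K + 2))) :
    ∃ t > 0, ∃ f : V → sumZero (Fin (K + 2)),
      MinimalFor (IsVectorColoring G t) (tightGraph G t) f ∧
        ∃ x y, (tightGraph G t f).Adj x y := by
  obtain ⟨t, ht, hmax⟩ := (isVectorColoring_simplexVertex c).exists_maximal hG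
  obtain ⟨f, hf⟩ := exists_minimalFor_of_wellFoundedLT _ (tightGraph G t) hmax.1
  have ht₀ : 0 < t := lt_of_lt_of_le (one_div_pos.2 (Nat.cast_pos.2 Fintype.card_pos)) ht
  exact ⟨t, ht₀, f, hf, hf.1.exists_tightGraph_adj hmax⟩

theorem exists_isFrozenUnder_of_minimalFor [Finite V] {E : Type*} [NormedAddCommGroup E]
    [InnerProductSpace ℝ E] [FiniteDimensional ℝ E] {K : ℕ} (hK₀ : K ≠ 0)
    (hK : finrank ℝ E ≤ K + 1) {t : ℝ} (ht : 0 < t) {f : V → E}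
    (hf : MinimalFor (IsVectorColoring G t) (tightGraph G t) f)
    (htight : ∃ x y, (tightGraph G t f).Adj x y) :
    ∃ (N : Type u) (_ : Finite N) (_ : Nonempty N) (T : SimpleGraph N) (φ : T →g G),
      (∀ x, (T.neighborSet x).ncard ≤ 2 * K) ∧ IsFrozenUnder f φ := by
  have : NeZero K := ⟨hK₀⟩
  choose C hC hrigid using fun d : (tightGraph G t f).Dart =>
    exists_forall_inner_le_imp_eq hK ht hf d.adj
  obtain ⟨N, _, _, T, φ, hdeg, hφ⟩ := exists_hom_forall_exists_dart htight hC
  refine ⟨N, ‹_›, ‹_›, T, ⟨φ, fun h => (φ.map_adj h).1⟩, by simpa using hdeg, fun s p hp => ?_⟩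
  obtain ⟨d, hd, hsub⟩ := hφ s
  refine (hrigid d (f p) (hf.1.norm_le_one p) fun a ha => ?_).trans (congr_arg f hd)
  obtain ⟨s', hs', rfl⟩ := hsub ha
  obtain ⟨q, hpq, hq⟩ := hp s' hs'
  exact hq ▸ hf.1.inner_le hpq

-- With two colors the vectors of a vector coloring lie on a line and `K₂` already works.
lemma IsFrozenUnder.of_coloring_fin_two (c : G.Coloring (Fin 2))
    (φ : (⊤ : SimpleGraph (Fin 2)) →g G) : IsFrozenUnder c φ := fun s p hp => by
  obtain ⟨s', hs'⟩ := exists_ne s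
  obtain ⟨q, hpq, hq⟩ := hp s' hs'.symm
  have h₁ := c.valid hpq
  have h₂ := c.valid (φ.map_adj hs'.symm)
  lia

lemma exists_not_reconfigConnected_of_coloring_fin_two (hG : ∃ x y, G.Adj x y)
    (c : G.Coloring (Fin 2)) :
    ∃ T : SimpleGraph (Fin 2), (∀ x, (T.neighborSet x).ncard ≤ 1) ∧ ¬ReconfigConnected T G := by
  obtain ⟨x, y, hxy⟩ := id hG
  let φ : (⊤ : SimpleGraph (Fin 2)) →g G := ⟨![x, y], fun {a b} hab => by
    fin_cases a <;> fin_cases b <;> simp_all [hxy.symm]⟩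
  refine ⟨⊤, fun a => ?_, (IsFrozenUnder.of_coloring_fin_two c φ).not_reconfigConnected
    (fun _ _ => c.valid) hG ⟨SimpleGraph.selfColoring _⟩⟩
  rw [SimpleGraph.neighborSet_top, ncard_compl]
  simp

theorem exists_not_reconfigConnected_of_coloring [Finite V] (hG : ∃ x y, G.Adj x y) {K : ℕ}
    (hK : K ≠ 0) (c : G.Coloring (Fin (K + 2))) :
    ∃ (N : Type u) (_ : Finite N) (T : SimpleGraph N),
      (∀ x, (T.neighborSet x).ncard ≤ 2 * K) ∧ ¬ReconfigConnected T G := by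
  obtain ⟨t, ht, f, hf, htight⟩ := exists_minimalFor_tightGraph hG c
  have hdim : finrank ℝ (sumZero (Fin (K + 2))) ≤ K + 1 := by
    have h := finrank_sumZero_add_one (Fin (K + 2))
    rw [Fintype.card_fin] at h
    exact (Nat.succ_injective h).le
  obtain ⟨N, _, _, T, φ, hdeg, hφ⟩ := exists_isFrozenUnder_of_minimalFor hK hdim ht hf htight
  refine ⟨N ⊕ N, inferInstance, T.bipartiteDoubleCover, fun x => ?_,
    hφ.doubleCoverHom.not_reconfigConnected (fun p q => hf.1.ne_of_adj ht) hG
      T.isBipartite_bipartiteDoubleCover⟩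
  rw [ncard_neighborSet_bipartiteDoubleCover]
  exact hdeg _

end Main

theorem brightwell_winkler_general {V : Type*} [Finite V] (G : SimpleGraph V)
    (hedge : ∃ x y : V, G.Adj x y) (d : ℕ) (hd : 1 ≤ d)
    (h : ∀ (m : ℕ) (T : SimpleGraph (Fin m)),
      (∀ v, (T.neighborSet v).ncard ≤ d) → ReconfigConnected T G) :
    (d + 5 : ℕ∞) ≤ 2 * G.chromaticNumber := by
  have := Fintype.ofFinite V
  obtain ⟨x, y, hxy⟩ := id hedge
  obtain ⟨n, hn⟩ := SimpleGraph.chromaticNumber_ne_top_iff_exists.2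
    ⟨_, G.colorable_of_fintype⟩ |> ENat.ne_top_iff_exists.1
  have htwo : 2 ≤ n := by exact_mod_cast hn ▸ SimpleGraph.two_le_chromaticNumber_of_adj hxy
  obtain ⟨K, rfl⟩ := Nat.exists_eq_add_of_le' htwo
  obtain ⟨c⟩ : G.Colorable (K + 2) := SimpleGraph.chromaticNumber_le_iff_colorable.1 hn.ge
  rw [← hn]
  by_contra! hlt
  have hKd : 2 * K ≤ d := by
    norm_cast at hlt
    lia
  rcases eq_or_ne K 0 with rfl | hK
  · obtain ⟨T, hdeg, hT⟩ := exists_not_reconfigConnected_of_coloring_fin_two hedge c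
    exact hT (h 2 T fun x => (hdeg x).trans hd)
  · obtain ⟨N, _, T, hdeg, hT⟩ := exists_not_reconfigConnected_of_coloring hedge hK c
    exact hT (.of_forall_fin h fun x => (hdeg x).trans hKd)

/-- **Brightwell–Winkler**: let `G` be a finite simple graph with at least one edge
and `d ≥ 1`. If for every finite simple graph `T` with maximum degree at most `d` the
set of graph homomorphisms `T → G` is empty or connected under single-vertex changes
(any two homomorphisms are joined by a finite chain of homomorphisms in which
consecutive ones differ at exactly one vertex), then `2·χ(G) ≥ d + 4`. -/
theorem brightwell_winkler {V : Type} [Fintype V] (G : SimpleGraph V)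
    (hedge : ∃ x y : V, G.Adj x y) (d : ℕ) (hd : 1 ≤ d)
    (h : ∀ (m : ℕ) (T : SimpleGraph (Fin m)),
      (∀ v : Fin m, (T.neighborSet v).ncard ≤ d) →
      ∀ φ ψ : T →g G,
        Relation.ReflTransGen
          (fun f g : T →g G => ∃ x, f x ≠ g x ∧ ∀ y, y ≠ x → f y = g y) φ ψ) :
    (d + 4 : ℕ∞) ≤ 2 * G.chromaticNumber :=
  le_trans (by gcongr; norm_num) (brightwell_winkler_general G hedge d hd h)
end

section
/- Let G be a finite simple graph and n an integer such that the maximum degree of G is at most n − 2. Then the set of proper colorings c : V(G) → {1,…,n} is nonempty, and any two proper colorings are connected by a finite sequence of proper colorings in which consecutive colorings differ at exactly one vertex. (Equivalently, the Hom complex Hom(G, K_n) is 0-connected.) -/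
/-!
Colorings exist by greedy choice along a well-order of the vertices. To connect `c` to `d`, make
them agree at one more vertex `v`: first move the neighbors of `v` that carry the color `d v` to
other colors, which is possible because the colors of the neighbors of a vertex together with one
more forbidden color never exhaust the palette, then give `v` the color `d v`. Since `d` is proper,
no neighbor of `v` has color `d v` in `d`, so the neighbors that had to move did not agree with `d`
yet and no agreement is lost.
-/

section Recoloring

variable {V α : Type*} {G : SimpleGraph V}

/-- The reconfiguration graph of the proper `α`-colorings of `G`: two colorings are adjacent when
they differ at exactly one vertex. For `α = Fin n` it is the 1-skeleton of `Hom(G, K_n)`. -/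
def recoloringGraph (G : SimpleGraph V) (α : Type*) : SimpleGraph (G.Coloring α) where
  Adj c d := ∃! v, c v ≠ d v
  symm := ⟨fun _ _ h ↦ by simpa only [ne_comm] using h⟩
  loopless := ⟨fun _ ⟨_, hv, _⟩ ↦ hv rfl⟩

theorem reflTransGen_of_reachable {c d : G.Coloring α} (h : (recoloringGraph G α).Reachable c d) :
    Relation.ReflTransGen
      (fun f g : V → α =>
        (∀ x y, G.Adj x y → f x ≠ f y) ∧ (∀ x y, G.Adj x y → g x ≠ g y) ∧
        ∃ x, f x ≠ g x ∧ ∀ y, y ≠ x → f y = g y) c d := by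
  rw [SimpleGraph.reachable_iff_reflTransGen] at h
  refine h.lift (fun c : G.Coloring α ↦ (c : V → α)) fun a b ⟨x, hx, hunique⟩ ↦ ?_
  exact ⟨fun _ _ ↦ a.valid, fun _ _ ↦ b.valid, x, hx, fun y hy ↦ not_imp_comm.1 (hunique y) hy⟩

open Classical in
/-- The proper coloring obtained from `c` by giving the vertex `v` a color `a` that none of its
neighbors carries. -/
noncomputable def recolor (c : G.Coloring α) (v : V) (a : α) (ha : ∀ w, G.Adj v w → c w ≠ a) :
    G.Coloring α :=
  .mk (Function.update c v a) fun {x y} hxy ↦ by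
    rcases eq_or_ne x v with rfl | hx
    · rw [Function.update_self, Function.update_of_ne hxy.ne']
      exact (ha y hxy).symm
    rcases eq_or_ne y v with rfl | hy
    · rw [Function.update_self, Function.update_of_ne hx]
      exact ha x hxy.symm
    · rw [Function.update_of_ne hx, Function.update_of_ne hy]
      exact c.valid hxy

section

variable {c : G.Coloring α} {v w : V} {a : α} (ha : ∀ w, G.Adj v w → c w ≠ a)

@[simp]
theorem recolor_self : recolor c v a ha v = a := by
  simp only [recolor, SimpleGraph.Coloring.mk, RelHom.coeFn_mk, Function.update_self]

theorem recolor_of_ne (hw : w ≠ v) : recolor c v a ha w = c w := by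
  classical exact Function.update_of_ne hw a c

theorem reachable_recolor : (recoloringGraph G α).Reachable c (recolor c v a ha) := by
  by_cases hv : c v = a
  · suffices c = recolor c v a ha from this ▸ .rfl
    ext w
    obtain rfl | hw := eq_or_ne w v
    · rw [recolor_self, hv]
    · rw [recolor_of_ne ha hw]
  · refine SimpleGraph.Adj.reachable ⟨v, ?_, fun w hw ↦ ?_⟩
    · simpa only [recolor_self] using hv
    · by_contra hwv
      exact hw (recolor_of_ne ha hwv).symm

end

theorem exists_notMem_of_encard_lt_card {s : Set α} (hs : s.encard < ENat.card α) :
    ∃ a, a ∉ s :=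
  (Set.ne_univ_iff_exists_notMem s).1 fun h ↦ hs.ne (h ▸ Set.encard_univ α)

theorem nonempty_coloring_of_encard_neighborSet_lt
    (hdeg : ∀ v, (G.neighborSet v).encard < ENat.card α) : Nonempty (G.Coloring α) := by
  obtain ⟨_, _⟩ := exists_wellFoundedLT V
  have hfree (v : V) (f : Set.Iio v → α) : ∃ a, a ∉ f '' {u | G.Adj v u} :=
    exists_notMem_of_encard_lt_card <| calc
      (f '' {u | G.Adj v u}).encard ≤ {u : Set.Iio v | G.Adj v u}.encard := Set.encard_image_le ..
      _ ≤ (G.neighborSet v).encard := Set.encard_preimage_val_le_encard_right ..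
      _ < ENat.card α := hdeg v
  choose greedy hgreedy using hfree
  let c : V → α := wellFounded_lt.fix fun v earlier ↦ greedy v fun u ↦ earlier u u.2
  have hc {u v : V} (huv : u < v) (hadj : G.Adj v u) : c u ≠ c v := by
    have hv : c v = greedy v fun u ↦ c u := wellFounded_lt.fix_eq _ v
    exact fun hsame ↦ hgreedy v (fun u ↦ c u) ⟨⟨u, huv⟩, hadj, hsame.trans hv⟩
  refine ⟨.mk c fun {u v} hadj ↦ ?_⟩
  obtain huv | hvu := hadj.ne.lt_or_gt
  · exact hc huv hadj.symm
  · exact (hc hvu hadj).symm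

theorem exists_ne_and_forall_adj_ne {v : V} (hv : (G.neighborSet v).encard + 1 < ENat.card α)
    (c : V → α) (a : α) : ∃ b ≠ a, ∀ w, G.Adj v w → c w ≠ b := by
  have hcard : (insert a (c '' G.neighborSet v)).encard < ENat.card α := calc
    (insert a (c '' G.neighborSet v)).encard ≤ (c '' G.neighborSet v).encard + 1 :=
      Set.encard_insert_le ..
    _ ≤ (G.neighborSet v).encard + 1 := by gcongr; exact Set.encard_image_le ..
    _ < ENat.card α := hv
  obtain ⟨b, hb⟩ := exists_notMem_of_encard_lt_card hcard
  obtain ⟨hba, hbc⟩ := not_or.1 hb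
  exact ⟨b, hba, fun w hw hwb ↦ hbc ⟨w, hw, hwb⟩⟩

theorem exists_reachable_forall_mem_ne
    (hdeg : ∀ v, (G.neighborSet v).encard + 1 < ENat.card α) (c : G.Coloring α) (a : α)
    {s : Set V} (hs : s.Finite) :
    ∃ c', (recoloringGraph G α).Reachable c c' ∧ (∀ v ∈ s, c' v ≠ a) ∧
      ∀ v, (v ∈ s → c v ≠ a) → c' v = c v := by
  induction s, hs using Set.Finite.induction_on with
  | empty => exact ⟨c, .rfl, fun _ h ↦ h.elim, fun _ _ ↦ rfl⟩
  | @insert u s _ _ ih =>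
    obtain ⟨c', hreach, hne, hkeep⟩ := ih
    by_cases hu : c' u = a
    · obtain ⟨b, hba, hb⟩ := exists_ne_and_forall_adj_ne (hdeg u) c' a
      refine ⟨recolor c' u b hb, hreach.trans (reachable_recolor hb), fun v hv ↦ ?_, fun v hv ↦ ?_⟩
      · obtain rfl | hvu := eq_or_ne v u
        · rwa [recolor_self]
        · rw [recolor_of_ne hb hvu]
          exact hne v (hv.resolve_left hvu)
      · have hcv : c' v = c v := hkeep v fun hvs ↦ hv (.inr hvs)
        have hvu : v ≠ u := by
          rintro rfl
          exact hv (.inl rfl) (hcv ▸ hu)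
        rw [recolor_of_ne hb hvu, hcv]
    · exact ⟨c', hreach, Set.forall_mem_insert.2 ⟨hu, hne⟩,
        fun v hv ↦ hkeep v fun hvs ↦ hv (.inr hvs)⟩

theorem exists_reachable_eq_and_forall_eq
    (hdeg : ∀ v, (G.neighborSet v).encard + 1 < ENat.card α) (c d : G.Coloring α) (v : V) :
    ∃ c', (recoloringGraph G α).Reachable c c' ∧ c' v = d v ∧ ∀ x, c x = d x → c' x = d x := by
  have hfinite : (G.neighborSet v).Finite :=
    Set.encard_lt_top_iff.1 <| lt_top_of_lt <| le_self_add.trans_lt (hdeg v)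
  obtain ⟨c', hreach, hfree, hkeep⟩ := exists_reachable_forall_mem_ne hdeg c (d v) hfinite
  refine ⟨recolor c' v (d v) hfree, hreach.trans (reachable_recolor hfree), recolor_self hfree,
    fun x hx ↦ ?_⟩
  obtain rfl | hxv := eq_or_ne x v
  · exact recolor_self hfree
  · rw [recolor_of_ne hfree hxv, ← hx]
    exact hkeep x fun hadj ↦ hx ▸ (d.valid hadj).symm

theorem reachable_of_finite_ne (hdeg : ∀ v, (G.neighborSet v).encard + 1 < ENat.card α)
    {c d : G.Coloring α} (hcd : {v | c v ≠ d v}.Finite) :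
    (recoloringGraph G α).Reachable c d := by
  suffices ∀ s : Set V, s.Finite → ∀ c : G.Coloring α, (∀ v ∉ s, c v = d v) →
      (recoloringGraph G α).Reachable c d from
    this _ hcd c fun _ ↦ not_not.1
  intro s hs
  induction s, hs using Set.Finite.induction_on with
  | empty =>
    intro c hagree
    obtain rfl : c = d := RelHom.ext fun v ↦ hagree v (Set.notMem_empty v)
    rfl
  | @insert v s _ _ ih =>
    intro c hagree
    obtain ⟨c', hreach, hv, hkeep⟩ := exists_reachable_eq_and_forall_eq hdeg c d v
    refine hreach.trans (ih c' fun x hx ↦ ?_)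
    obtain rfl | hxv := eq_or_ne x v
    · exact hv
    · exact hkeep x (hagree x (not_or.2 ⟨hxv, hx⟩))

end Recoloring

theorem encard_add_one_lt_card_fin {β : Type*} {s : Set β} (hfinite : s.Finite) {n : ℕ}
    (hs : s.ncard + 2 ≤ n) : s.encard + 1 < ENat.card (Fin n) := by
  rw [← hfinite.cast_ncard_eq, ENat.card_eq_coe_fintype_card, Fintype.card_fin]
  exact_mod_cast hs

theorem colorings_connected_general {V α : Type*} (G : SimpleGraph V)
    (hdeg : ∀ v, (G.neighborSet v).encard + 1 < ENat.card α) :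
    Nonempty (G.Coloring α) ∧
    ∀ c₁ c₂ : G.Coloring α, {v | c₁ v ≠ c₂ v}.Finite →
      (recoloringGraph G α).Reachable c₁ c₂ :=
  ⟨nonempty_coloring_of_encard_neighborSet_lt fun v ↦ le_self_add.trans_lt (hdeg v),
    fun _ _ ↦ reachable_of_finite_ne hdeg⟩

/-- **Babson–Kozlov / Čukić–Kozlov (case k = 0)**: if the maximum degree of a finite
simple graph `G` is at most `n - 2`, then proper `n`-colorings of `G` exist and any
two are joined by a finite chain of proper colorings in which consecutive colorings
differ at exactly one vertex; i.e. `Hom(G, K_n)` is `0`-connected. -/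
theorem colorings_connected {V : Type} [Fintype V] (G : SimpleGraph V) (n : ℕ)
    (hdeg : ∀ v : V, (G.neighborSet v).ncard + 2 ≤ n) :
    (∃ c : V → Fin n, ∀ x y, G.Adj x y → c x ≠ c y) ∧
    ∀ c₁ c₂ : V → Fin n,
      (∀ x y, G.Adj x y → c₁ x ≠ c₁ y) → (∀ x y, G.Adj x y → c₂ x ≠ c₂ y) →
      Relation.ReflTransGen
        (fun f g : V → Fin n =>
          (∀ x y, G.Adj x y → f x ≠ f y) ∧ (∀ x y, G.Adj x y → g x ≠ g y) ∧
          ∃ x, f x ≠ g x ∧ ∀ y, y ≠ x → f y = g y) c₁ c₂ := by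
  obtain ⟨⟨c⟩, hreach⟩ := colorings_connected_general G fun v ↦
    encard_add_one_lt_card_fin (Set.toFinite _) (hdeg v)
  exact ⟨⟨c, fun _ _ ↦ c.valid⟩, fun c₁ c₂ h₁ h₂ ↦ reflTransGen_of_reachable <|
    hreach (.mk c₁ (h₁ _ _)) (.mk c₂ (h₂ _ _)) (Set.toFinite _)⟩
end
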